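/- Let n ≥ 2 and let Ω₁, Ω₂ ⊂ ℝⁿ be nonempty bounded open sets with disjoint closures. Then there exist constants σ > 0 and C > 1 (depending only on Ω₁ and Ω₂) such that for every g ∈ L²(Ω₂), every ε > 0 and every δ ∈ (0,1), one has ( ∫_{Ω₂} ((Q_δ g)(x))² dx )^{1/2} ≤ exp( C · (|ln ε| + 2) / δ^{σ} ) · ( Σ_{j=1}^{n} ∫_{Ω₁} ((R_j^{Ω₂} g)(x))² dx )^{1/2} + (ε/2) · ‖g‖_{L²(Ω₂)}, where (Q_δ g)(x) := δ · ∫_{Ω₂} g(y) · (|x − y|² + δ²)^{−(n+1)/2} dy. -/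

import Mathlib

/-!
The inequality is a quantitative unique continuation estimate for the Riesz potential
`pot g x τ = ∫ g(y) (∑ (xᵢ - yᵢ)² + τ)^{-a} dy` with `a = (n + 1) / 2`, since
`Qdelta δ g x = δ * pot g x δ²` and the truncated Riesz transforms are the components
`vpot g j x = ∫ g(y) (xⱼ - yⱼ) (∑ (xᵢ - yᵢ)²)^{-a} dy` of the corresponding vector potential. Both
kernels extend holomorphically to complex `x` and `τ` as long as the complexified quadratic form
`quad` stays in the right half-plane, and there the potentials are bounded by a multiple of `∫ |g|`.
Smallness is propagated by complex analysis; every step yields, for all natural numbers `N`, a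
bound of the form `A e^{α N} * data + D e^{-N} * ∫ |g|`, where `data` is the `L²` norm over `Ω₁`.

* Near a point `x₁` of `Ω₁` the Riesz transforms are Lipschitz, so averaging over a ball of
  radius comparable to `e^{-N}` turns the `L²` norm into a pointwise bound at real points
  (`Setup.truncRiesz_small`). A two-constants estimate in a half-disc whose diameter corresponds to
  real points extends the bound to a complex polydisc (`Setup.vpot_small`).
* The divergence of `vpot` is `(n - 2 * a) pot = -pot`, so Cauchy's estimate bounds `pot` at `τ = 0`
  (`Good.norm_pot_le_of_vpot`, `Setup.pot_small`).
* The `τ`-derivatives of `pot` are, up to constants, iterated Laplacians in `x`. Cauchy's estimates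
  therefore control the first `N` Taylor coefficients at `τ = 0`, and the remainder is geometrically
  small, which gives smallness for small complex `τ` (`Good.norm_pot_tau_le`).
* The point `(x, δ)`, with `x` in `Ω₂`, is joined to a point over `x₁` by a segment, complexified to
  a thin sector `w = v^{1/p}`, `Re v > 0`, on which `quad` still has positive real part, bounded
  below by a multiple of `δ²`. A two-constants estimate in the half-disc, with smallness on the
  arc `|v| = 1`, reaches `w = δ / 4`, that is `v = (δ / 4)^p`, with an error
  `e^{-N (δ / 4)^p}` (`norm_pot_path_le`, `Setup.Qdelta_small`).

Choosing `N` of order `(|log ε| + 1 / δ) / δ^p` (`exists_param`) gives the claim with `σ = p + 1`,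
after the Cauchy-Schwarz inequality on the bounded set `Ω₂`.
-/

open MeasureTheory Set

/-- Unnormalized `j`-th truncated Riesz transform:
`(R_j^Ω f)(x) = ∫_Ω f(y) (x_j - y_j)/|x - y|^{n+1} dy`. -/
noncomputable def truncRiesz (n : ℕ) (Ω : Set (EuclideanSpace ℝ (Fin n))) (j : Fin n)
    (f : EuclideanSpace ℝ (Fin n) → ℝ) (x : EuclideanSpace ℝ (Fin n)) : ℝ :=
  ∫ y in Ω, f y * (x j - y j) / ‖x - y‖ ^ (n + 1)

/-- `(Q_δ g)(x) = δ ∫_Ω g(y) (|x - y|² + δ²)^{-(n+1)/2} dy`. -/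
noncomputable def Qdelta (n : ℕ) (Ω : Set (EuclideanSpace ℝ (Fin n))) (δ : ℝ)
    (g : EuclideanSpace ℝ (Fin n) → ℝ) (x : EuclideanSpace ℝ (Fin n)) : ℝ :=
  δ * ∫ y in Ω, g y * (‖x - y‖ ^ 2 + δ ^ 2) ^ (-((n : ℝ) + 1) / 2)

namespace RieszPropagation

open Metric

variable {n : ℕ}

/-! ### Holomorphy of complexified potentials -/

/-- Differentiation under the integral sign for a kernel that is holomorphic and uniformly bounded
in the parameter: Cauchy's estimate supplies the local bound on the derivative of the kernel. -/
lemma hasDerivAt_integral_holo {α : Type*} [MeasurableSpace α] {μ : Measure α} {g : α → ℂ}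
    (hg : Integrable g μ) {U : Set ℂ} (hU : IsOpen U) {k k' : ℂ → α → ℂ} {B : ℝ}
    (hk : ∀ᵐ y ∂μ, ∀ z ∈ U, HasDerivAt (fun w => k w y) (k' z y) z)
    (hB : ∀ᵐ y ∂μ, ∀ z ∈ U, ‖k z y‖ ≤ B)
    (hm : ∀ z ∈ U, AEStronglyMeasurable (k z) μ) (hm' : ∀ z ∈ U, AEStronglyMeasurable (k' z) μ)
    {z : ℂ} (hz : z ∈ U) :
    HasDerivAt (fun w => ∫ y, g y * k w y ∂μ) (∫ y, g y * k' z y ∂μ) z := by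
  obtain ⟨ε, hε, hεU⟩ := Metric.isOpen_iff.1 hU z hz
  have hr : 0 < ε / 3 := by positivity
  have hsub : ∀ w ∈ ball z (ε / 3), closedBall w (ε / 3) ⊆ U := by
    intro w hw x hx
    apply hεU
    rw [mem_ball] at *
    rw [mem_closedBall] at hx
    linarith [dist_triangle x w z]
  refine (hasDerivAt_integral_of_dominated_loc_of_deriv_le (𝕜 := ℂ) (μ := μ) (s := ball z (ε / 3))
    (F := fun w y => g y * k w y) (F' := fun w y => g y * k' w y)
    (bound := fun y => ‖g y‖ * (B / (ε / 3))) (ball_mem_nhds _ hr) ?_ ?_ ?_ ?_ ?_ ?_).2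
  · filter_upwards [hU.mem_nhds hz] with w hw
    exact hg.1.mul (hm w hw)
  · refine (hg.norm.mul_const B).mono' (hg.1.mul (hm z hz)) ?_
    filter_upwards [hB] with y hy
    rw [norm_mul]
    exact mul_le_mul_of_nonneg_left (hy z hz) (norm_nonneg _)
  · exact hg.1.mul (hm' z hz)
  · filter_upwards [hk, hB] with y hy hyB w hw
    rw [norm_mul]
    refine mul_le_mul_of_nonneg_left ?_ (norm_nonneg _)
    have hwU : w ∈ U := hsub w hw (mem_closedBall_self hr.le)
    rw [← (hy w hwU).deriv]
    refine Complex.norm_deriv_le_of_forall_mem_sphere_norm_le hr ?_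
      fun x hx => hyB x (hsub w hw (sphere_subset_closedBall hx))
    exact DifferentiableOn.diffContOnCl_ball
      (fun x hx => (hy x hx).differentiableAt.differentiableWithinAt) (hsub w hw)
  · exact hg.norm.mul_const _
  · filter_upwards [hk] with y hy w hw
    exact (hy w (hsub w hw (mem_closedBall_self hr.le))).const_mul _

/-- The complexified quadratic form `∑ (xᵢ - yᵢ)² + τ`, for `x ∈ ℂⁿ`, `τ ∈ ℂ` and real `y`. -/
def quad (x : Fin n → ℂ) (τ : ℂ) (y : EuclideanSpace ℝ (Fin n)) : ℂ :=
  ∑ i, (x i - (y i : ℂ)) ^ 2 + τ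

/-- The potential `∫_Ω g(y) (∑ (xᵢ - yᵢ)² + τ)^{-a} dy` at complex arguments. -/
noncomputable def pot (Ω : Set (EuclideanSpace ℝ (Fin n))) (g : EuclideanSpace ℝ (Fin n) → ℝ)
    (a : ℝ) (x : Fin n → ℂ) (τ : ℂ) : ℂ :=
  ∫ y in Ω, (g y : ℂ) * quad x τ y ^ (-(a : ℂ))

/-- The vector potential `∫_Ω g(y) (xⱼ - yⱼ) (∑ (xᵢ - yᵢ)²)^{-a} dy` at complex arguments; for
real `x` and `a = (n + 1) / 2` it is the truncated Riesz transform. -/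
noncomputable def vpot (Ω : Set (EuclideanSpace ℝ (Fin n))) (g : EuclideanSpace ℝ (Fin n) → ℝ)
    (a : ℝ) (j : Fin n) (x : Fin n → ℂ) : ℂ :=
  ∫ y in Ω, (g y : ℂ) * ((x j - (y j : ℂ)) * quad x 0 y ^ (-(a : ℂ)))

lemma measurable_quad (x : Fin n → ℂ) (τ : ℂ) : Measurable (quad x τ) := by
  unfold quad
  fun_prop

lemma measurable_quad_cpow (x : Fin n → ℂ) (τ c : ℂ) : Measurable (fun y => quad x τ y ^ c) :=
  (measurable_quad x τ).pow_const c

lemma norm_cpow_le {s : ℂ} {κ a : ℝ} (hκ : 0 < κ) (ha : 0 ≤ a) (h : κ ≤ s.re) :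
    ‖s ^ (-(a : ℂ))‖ ≤ κ ^ (-a) := by
  rw [← Complex.ofReal_neg, Complex.norm_cpow_real]
  exact Real.rpow_le_rpow_of_nonpos hκ (h.trans (Complex.re_le_norm s)) (by linarith)

/-- Derivative of a potential along a complex curve `w ↦ (X w, T w)`, with `X` affine of direction
`q` and `T` entire, and with an extra holomorphic bounded factor `m` in the kernel. -/
lemma hasDerivAt_kernel {Ω : Set (EuclideanSpace ℝ (Fin n))} (hΩ : MeasurableSet Ω)
    {g : EuclideanSpace ℝ (Fin n) → ℝ} (hg : IntegrableOn g Ω)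
    {U : Set ℂ} (hU : IsOpen U) {κ a B : ℝ} (hκ : 0 < κ) (ha : 0 ≤ a)
    {X : ℂ → Fin n → ℂ} {q : Fin n → ℂ} (hX : ∀ w i, HasDerivAt (fun w => X w i) (q i) w)
    {T T' : ℂ → ℂ} (hT : ∀ w, HasDerivAt T (T' w) w)
    {m m' : ℂ → EuclideanSpace ℝ (Fin n) → ℂ}
    (hm : ∀ w y, HasDerivAt (fun w => m w y) (m' w y) w)
    (hmm : ∀ w, Measurable (m w)) (hmm' : ∀ w, Measurable (m' w))
    (hmB : ∀ w ∈ U, ∀ y ∈ Ω, ‖m w y‖ ≤ B)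
    (hre : ∀ w ∈ U, ∀ y ∈ Ω, κ ≤ (quad (X w) (T w) y).re) {w : ℂ} (hw : w ∈ U) :
    HasDerivAt (fun w => ∫ y in Ω, (g y : ℂ) * (m w y * quad (X w) (T w) y ^ (-(a : ℂ))))
      (∫ y in Ω, (g y : ℂ) * (m' w y * quad (X w) (T w) y ^ (-(a : ℂ)) +
        m w y * (-(a : ℂ) * quad (X w) (T w) y ^ (-((a + 1 : ℝ) : ℂ)) *
          (∑ i, 2 * (X w i - (y i : ℂ)) * q i + T' w)))) w := by
  have hexp : -((a + 1 : ℝ) : ℂ) = -(a : ℂ) - 1 := by push_cast; ring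
  simp only [hexp]
  refine hasDerivAt_integral_holo (μ := volume.restrict Ω) (B := B * κ ^ (-a))
    (k := fun w y => m w y * quad (X w) (T w) y ^ (-(a : ℂ)))
    (k' := fun w y => m' w y * quad (X w) (T w) y ^ (-(a : ℂ)) +
        m w y * (-(a : ℂ) * quad (X w) (T w) y ^ (-(a : ℂ) - 1) *
          (∑ i, 2 * (X w i - (y i : ℂ)) * q i + T' w)))
    hg.ofReal hU ?_ ?_ ?_ ?_ hw
  · filter_upwards [ae_restrict_mem hΩ] with y hy z hz
    have hs : HasDerivAt (fun w => quad (X w) (T w) y)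
        (∑ i, 2 * (X z i - (y i : ℂ)) * q i + T' z) z := by
      unfold quad
      refine HasDerivAt.add ?_ (hT z)
      refine HasDerivAt.fun_sum fun i _ => ?_
      simpa using ((hX z i).sub_const (y i : ℂ)).fun_pow 2
    refine (hm z y).mul (hs.cpow_const ?_)
    rw [Complex.mem_slitPlane_iff]
    exact Or.inl (hκ.trans_le (hre z hz y hy))
  · filter_upwards [ae_restrict_mem hΩ] with y hy z hz
    rw [norm_mul]
    exact mul_le_mul (hmB z hz y hy) (norm_cpow_le hκ ha (hre z hz y hy)) (norm_nonneg _)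
      ((norm_nonneg _).trans (hmB z hz y hy))
  · intro z _
    exact ((hmm z).mul (measurable_quad_cpow _ _ _)).aestronglyMeasurable
  · intro z _
    have := measurable_quad_cpow (X z) (T z) (-(a : ℂ))
    have := measurable_quad_cpow (X z) (T z) (-(a : ℂ) - 1)
    have := hmm z
    have := hmm' z
    refine Measurable.aestronglyMeasurable ?_
    fun_prop

lemma hasDerivAt_pot {Ω : Set (EuclideanSpace ℝ (Fin n))} (hΩ : MeasurableSet Ω)
    {g : EuclideanSpace ℝ (Fin n) → ℝ} (hg : IntegrableOn g Ω)
    {U : Set ℂ} (hU : IsOpen U) {κ a : ℝ} (hκ : 0 < κ) (ha : 0 ≤ a)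
    {X : ℂ → Fin n → ℂ} {q : Fin n → ℂ} (hX : ∀ w i, HasDerivAt (fun w => X w i) (q i) w)
    {T T' : ℂ → ℂ} (hT : ∀ w, HasDerivAt T (T' w) w)
    (hre : ∀ w ∈ U, ∀ y ∈ Ω, κ ≤ (quad (X w) (T w) y).re) {w : ℂ} (hw : w ∈ U) :
    HasDerivAt (fun w => pot Ω g a (X w) (T w))
      (∫ y in Ω, (g y : ℂ) * (-(a : ℂ) * quad (X w) (T w) y ^ (-((a + 1 : ℝ) : ℂ)) *
          (∑ i, 2 * (X w i - (y i : ℂ)) * q i + T' w))) w := by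
  have := hasDerivAt_kernel hΩ hg hU (B := 1) hκ ha hX hT (m := fun _ _ => 1) (m' := fun _ _ => 0)
    (fun w y => hasDerivAt_const _ _) (fun _ => measurable_const) (fun _ => measurable_const)
    (by simp) hre hw
  simpa [pot] using this

lemma norm_integral_mul_le {Ω : Set (EuclideanSpace ℝ (Fin n))} (hΩ : MeasurableSet Ω)
    {g : EuclideanSpace ℝ (Fin n) → ℝ} (hg : IntegrableOn g Ω)
    {k : EuclideanSpace ℝ (Fin n) → ℂ} {B : ℝ} (hB : ∀ y ∈ Ω, ‖k y‖ ≤ B) :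
    ‖∫ y in Ω, (g y : ℂ) * k y‖ ≤ B * ∫ y in Ω, |g y| := by
  rw [mul_comm, ← integral_mul_const]
  refine norm_integral_le_of_norm_le (hg.abs.mul_const B) ?_
  filter_upwards [ae_restrict_mem hΩ] with y hy
  rw [norm_mul, Complex.norm_real, Real.norm_eq_abs]
  exact mul_le_mul_of_nonneg_left (hB y hy) (abs_nonneg _)

lemma norm_pot_le {Ω : Set (EuclideanSpace ℝ (Fin n))} (hΩ : MeasurableSet Ω)
    {g : EuclideanSpace ℝ (Fin n) → ℝ} (hg : IntegrableOn g Ω) {κ a : ℝ} (hκ : 0 < κ) (ha : 0 ≤ a)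
    {x : Fin n → ℂ} {τ : ℂ} (hre : ∀ y ∈ Ω, κ ≤ (quad x τ y).re) :
    ‖pot Ω g a x τ‖ ≤ κ ^ (-a) * ∫ y in Ω, |g y| :=
  norm_integral_mul_le hΩ hg fun y hy => norm_cpow_le hκ ha (hre y hy)

/-- On the polydisc of radius `ρ` about `P` and for `|τ| < ρ²` the complexified quadratic form stays
uniformly in the right half-plane, so that all potentials are holomorphic there. -/
structure Good (Ω : Set (EuclideanSpace ℝ (Fin n))) (P : Fin n → ℂ) (ρ κ B : ℝ) : Prop where
  ρ_pos : 0 < ρ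
  κ_pos : 0 < κ
  re_le : ∀ x ∈ ball P ρ, ∀ τ : ℂ, ‖τ‖ < ρ ^ 2 → ∀ y ∈ Ω, κ ≤ (quad x τ y).re
  bound : ∀ x ∈ ball P ρ, ∀ y ∈ Ω, ∀ j, ‖x j - (y j : ℂ)‖ ≤ B

lemma hasDerivAt_line (p q : Fin n → ℂ) (w : ℂ) (i : Fin n) :
    HasDerivAt (fun w : ℂ => (p + w • q) i) (q i) w := by
  simpa using ((hasDerivAt_id w).mul_const (q i)).const_add (p i)

lemma isOpen_line_ball (p q P : Fin n → ℂ) (ρ : ℝ) : IsOpen {w : ℂ | p + w • q ∈ ball P ρ} :=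
  isOpen_ball.preimage (by fun_prop)

lemma Good.hasDerivAt_vpot {Ω : Set (EuclideanSpace ℝ (Fin n))} {P : Fin n → ℂ} {ρ κ B : ℝ}
    (h : Good Ω P ρ κ B) (hΩ : MeasurableSet Ω)
    {g : EuclideanSpace ℝ (Fin n) → ℝ} (hg : IntegrableOn g Ω) {a : ℝ} (ha : 0 ≤ a) (j : Fin n)
    (p q : Fin n → ℂ) {w : ℂ} (hw : p + w • q ∈ ball P ρ) :
    HasDerivAt (fun w : ℂ => vpot Ω g a j (p + w • q))
      (∫ y in Ω, (g y : ℂ) * (q j * quad (p + w • q) 0 y ^ (-(a : ℂ)) +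
        ((p + w • q) j - (y j : ℂ)) * (-(a : ℂ) * quad (p + w • q) 0 y ^ (-((a + 1 : ℝ) : ℂ)) *
          (∑ i, 2 * ((p + w • q) i - (y i : ℂ)) * q i)))) w := by
  have h0 : ‖(0 : ℂ)‖ < ρ ^ 2 := by simpa using pow_pos h.ρ_pos 2
  have := hasDerivAt_kernel hΩ hg (isOpen_line_ball p q P ρ) (B := B) h.κ_pos ha
    (hasDerivAt_line p q) (T := fun _ => 0) (T' := fun _ => 0) (fun w => hasDerivAt_const _ _)
    (m := fun w y => (p + w • q) j - (y j : ℂ)) (m' := fun _ _ => q j)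
    (fun w y => (hasDerivAt_line p q w j).sub_const _) (fun _ => by fun_prop)
    (fun _ => measurable_const)
    (fun w hw y hy => h.bound _ hw y hy j) (fun w hw y hy => h.re_le _ hw 0 h0 y hy) hw
  simpa [vpot] using this

lemma Good.norm_vpot_le {Ω : Set (EuclideanSpace ℝ (Fin n))} {P : Fin n → ℂ} {ρ κ B : ℝ}
    (h : Good Ω P ρ κ B) (hΩ : MeasurableSet Ω)
    {g : EuclideanSpace ℝ (Fin n) → ℝ} (hg : IntegrableOn g Ω) {a : ℝ} (ha : 0 ≤ a) (j : Fin n)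
    {x : Fin n → ℂ} (hx : x ∈ ball P ρ) :
    ‖vpot Ω g a j x‖ ≤ B * κ ^ (-a) * ∫ y in Ω, |g y| := by
  refine norm_integral_mul_le hΩ hg fun y hy => ?_
  rw [norm_mul]
  exact mul_le_mul (h.bound x hx y hy j)
    (norm_cpow_le h.κ_pos ha (h.re_le x hx 0 (by simpa using pow_pos h.ρ_pos 2) y hy))
    (norm_nonneg _) ((norm_nonneg _).trans (h.bound x hx y hy j))

/-! ### Gradient and divergence identities -/

lemma integrableOn_mul_bounded {Ω : Set (EuclideanSpace ℝ (Fin n))} (hΩ : MeasurableSet Ω)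
    {g : EuclideanSpace ℝ (Fin n) → ℝ} (hg : IntegrableOn g Ω)
    {k : EuclideanSpace ℝ (Fin n) → ℂ} (hk : Measurable k) {B : ℝ} (hB : ∀ y ∈ Ω, ‖k y‖ ≤ B) :
    IntegrableOn (fun y => (g y : ℂ) * k y) Ω := by
  have hg' : Integrable (fun y => (g y : ℂ)) (volume.restrict Ω) := hg.ofReal
  refine (hg.abs.mul_const B).mono' (hg'.1.mul hk.aestronglyMeasurable) ?_
  filter_upwards [ae_restrict_mem hΩ] with y hy
  rw [norm_mul, Complex.norm_real, Real.norm_eq_abs]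
  exact mul_le_mul_of_nonneg_left (hB y hy) (abs_nonneg _)

lemma Good.zero_lt {Ω : Set (EuclideanSpace ℝ (Fin n))} {P : Fin n → ℂ} {ρ κ B : ℝ}
    (h : Good Ω P ρ κ B) : ‖(0 : ℂ)‖ < ρ ^ 2 := by
  simpa using pow_pos h.ρ_pos 2

lemma Good.hasDerivAt_pot {Ω : Set (EuclideanSpace ℝ (Fin n))} {P : Fin n → ℂ} {ρ κ B : ℝ}
    (h : Good Ω P ρ κ B) (hΩ : MeasurableSet Ω)
    {g : EuclideanSpace ℝ (Fin n) → ℝ} (hg : IntegrableOn g Ω) {a : ℝ} (ha : 0 ≤ a)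
    (p q : Fin n → ℂ) {w : ℂ} (hw : p + w • q ∈ ball P ρ) :
    HasDerivAt (fun w : ℂ => pot Ω g a (p + w • q) 0)
      (∫ y in Ω, (g y : ℂ) * (-(a : ℂ) * quad (p + w • q) 0 y ^ (-((a + 1 : ℝ) : ℂ)) *
          (∑ i, 2 * ((p + w • q) i - (y i : ℂ)) * q i))) w := by
  have := RieszPropagation.hasDerivAt_pot hΩ hg (isOpen_line_ball p q P ρ) h.κ_pos ha
    (hasDerivAt_line p q) (T := fun _ => 0) (T' := fun _ => 0) (fun w => hasDerivAt_const _ _)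
    (fun w hw y hy => h.re_le _ hw 0 h.zero_lt y hy) hw
  simpa using this

/-- Cauchy's estimate along a complex line. -/
lemma norm_deriv_line_le {F : (Fin n → ℂ) → ℂ} {P x q : Fin n → ℂ} {ρ R r m : ℝ}
    (hF : ∀ w : ℂ, x + w • q ∈ ball P ρ → DifferentiableAt ℂ (fun w : ℂ => F (x + w • q)) w)
    (hq : ‖q‖ ≤ 1) (hr : 0 < r) (hR : R + r < ρ) (hx : x ∈ closedBall P R)
    (hm : ∀ x' ∈ closedBall P (R + r), ‖F x'‖ ≤ m) :
    ‖deriv (fun w : ℂ => F (x + w • q)) 0‖ ≤ m / r := by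
  have hmem : ∀ w ∈ closedBall (0 : ℂ) r, x + w • q ∈ closedBall P (R + r) := by
    intro w hw
    rw [mem_closedBall_zero_iff] at hw
    rw [mem_closedBall_iff_norm] at *
    have h1 : ‖w • q‖ ≤ r := by
      rw [norm_smul]
      nlinarith [norm_nonneg w, norm_nonneg q]
    calc ‖x + w • q - P‖ = ‖(x - P) + w • q‖ := by congr 1; abel
      _ ≤ R + r := (norm_add_le _ _).trans (add_le_add hx h1)
  refine Complex.norm_deriv_le_of_forall_mem_sphere_norm_le hr ?_
    fun w hw => hm _ (hmem w (sphere_subset_closedBall hw))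
  exact DifferentiableOn.diffContOnCl_ball (U := {w : ℂ | x + w • q ∈ ball P ρ})
    (fun w hw => (hF w hw).differentiableWithinAt)
    fun w hw => closedBall_subset_ball hR (hmem w hw)

lemma norm_single_one_le (i : Fin n) : ‖(Pi.single i 1 : Fin n → ℂ)‖ ≤ 1 := by
  refine (pi_norm_le_iff_of_nonneg zero_le_one).2 fun j => ?_
  by_cases h : j = i
  · subst h; simp
  · simp [h]

/-- The gradient of `pot a` is `-2 * a` times the vector potential of order `a + 1`, so Cauchy's
estimate for `pot a` bounds the latter. -/
lemma Good.norm_vpot_succ_le {Ω : Set (EuclideanSpace ℝ (Fin n))} {P : Fin n → ℂ} {ρ κ B : ℝ}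
    (h : Good Ω P ρ κ B) (hΩ : MeasurableSet Ω)
    {g : EuclideanSpace ℝ (Fin n) → ℝ} (hg : IntegrableOn g Ω) {a : ℝ} (ha : 0 ≤ a)
    {R r m : ℝ} (hr : 0 < r) (hR : R + r < ρ) (hm : ∀ x ∈ closedBall P (R + r), ‖pot Ω g a x 0‖ ≤ m)
    (i : Fin n) {x : Fin n → ℂ} (hx : x ∈ closedBall P R) :
    2 * a * ‖vpot Ω g (a + 1) i x‖ ≤ m / r := by
  have h0 : x + (0 : ℂ) • (Pi.single i 1 : Fin n → ℂ) ∈ ball P ρ := by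
    simpa using closedBall_subset_ball (by linarith) hx
  have h1 := norm_deriv_line_le (F := fun x => pot Ω g a x 0) (q := Pi.single i 1)
    (fun w hw => (h.hasDerivAt_pot hΩ hg ha x _ hw).differentiableAt)
    (norm_single_one_le i) hr hR hx hm
  rw [(h.hasDerivAt_pot hΩ hg ha x _ h0).deriv] at h1
  refine le_trans (le_of_eq ?_) h1
  have : (∫ y in Ω, (g y : ℂ) * (-(a : ℂ) *
      quad (x + (0 : ℂ) • (Pi.single i 1 : Fin n → ℂ)) 0 y ^ (-((a + 1 : ℝ) : ℂ)) *
      (∑ j, 2 * ((x + (0 : ℂ) • (Pi.single i 1 : Fin n → ℂ)) j - (y j : ℂ)) *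
        (Pi.single i 1 : Fin n → ℂ) j))) = (-(2 * a : ℝ) : ℂ) * vpot Ω g (a + 1) i x := by
    unfold vpot
    rw [← integral_const_mul]
    congr 1
    ext y
    have : ∑ j, 2 * ((x + (0 : ℂ) • (Pi.single i 1 : Fin n → ℂ)) j - (y j : ℂ)) *
        (Pi.single i 1 : Fin n → ℂ) j = 2 * (x i - (y i : ℂ)) := by
      rw [Finset.sum_eq_single i]
      · simp
      · intro j _ hj
        simp [hj]
      · simp
    rw [this, zero_smul, add_zero]
    push_cast
    ring
  rw [this, norm_mul, norm_neg, Complex.norm_real, Real.norm_of_nonneg (by linarith)]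

/-- The divergence of the vector potential of order `a` is `n - 2 * a` times `pot a`, so Cauchy's
estimate for the vector potential bounds `pot a`. -/
lemma Good.norm_pot_le_of_vpot {Ω : Set (EuclideanSpace ℝ (Fin n))} {P : Fin n → ℂ} {ρ κ B : ℝ}
    (h : Good Ω P ρ κ B) (hΩ : MeasurableSet Ω)
    {g : EuclideanSpace ℝ (Fin n) → ℝ} (hg : IntegrableOn g Ω) {a : ℝ} (ha : 0 ≤ a)
    {R r m : ℝ} (hr : 0 < r) (hR : R + r < ρ)
    (hm : ∀ j, ∀ x ∈ closedBall P (R + r), ‖vpot Ω g a j x‖ ≤ m)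
    {x : Fin n → ℂ} (hx : x ∈ closedBall P R) :
    |2 * a - n| * ‖pot Ω g a x 0‖ ≤ n * (m / r) := by
  have hxρ : x ∈ ball P ρ := closedBall_subset_ball (by linarith) hx
  have hre := h.re_le x hxρ 0 h.zero_lt
  have h0 : ∀ i, x + (0 : ℂ) • (Pi.single i 1 : Fin n → ℂ) ∈ ball P ρ := by
    intro i; simpa using hxρ
  have h1 : ∀ j, ‖∫ y in Ω, (g y : ℂ) * (quad x 0 y ^ (-(a : ℂ)) +
      (x j - (y j : ℂ)) * (-(a : ℂ) * quad x 0 y ^ (-((a + 1 : ℝ) : ℂ)) *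
        (2 * (x j - (y j : ℂ)))))‖ ≤ m / r := by
    intro j
    have h1 := norm_deriv_line_le (F := fun x => vpot Ω g a j x) (q := Pi.single j 1)
      (fun w hw => (h.hasDerivAt_vpot hΩ hg ha j x _ hw).differentiableAt)
      (norm_single_one_le j) hr hR hx (hm j)
    rw [(h.hasDerivAt_vpot hΩ hg ha j x _ (h0 j)).deriv] at h1
    refine le_trans (le_of_eq ?_) h1
    congr 2
    ext y
    have : ∑ i, 2 * ((x + (0 : ℂ) • (Pi.single j 1 : Fin n → ℂ)) i - (y i : ℂ)) *
        (Pi.single j 1 : Fin n → ℂ) i = 2 * (x j - (y j : ℂ)) := by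
      rw [Finset.sum_eq_single j]
      · simp
      · intro i _ hj
        simp [hj]
      · simp
    rw [this, zero_smul, add_zero]
    simp
  have h2 : ∑ j, ∫ y in Ω, (g y : ℂ) * (quad x 0 y ^ (-(a : ℂ)) +
      (x j - (y j : ℂ)) * (-(a : ℂ) * quad x 0 y ^ (-((a + 1 : ℝ) : ℂ)) *
        (2 * (x j - (y j : ℂ))))) = ((n - 2 * a : ℝ) : ℂ) * pot Ω g a x 0 := by
    rw [← integral_finsetSum]
    · unfold pot
      rw [← integral_const_mul]
      refine setIntegral_congr_fun hΩ fun y hy => ?_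
      have hne : quad x 0 y ≠ 0 := by
        intro h0
        have := hre y hy
        rw [h0] at this
        exact absurd h.κ_pos (not_lt.2 (by simpa using this))
      have hpow : quad x 0 y ^ (-(a : ℂ)) =
          quad x 0 y * quad x 0 y ^ (-((a + 1 : ℝ) : ℂ)) := by
        have : -(a : ℂ) = 1 + -((a + 1 : ℝ) : ℂ) := by push_cast; ring
        rw [this, Complex.cpow_add _ _ hne, Complex.cpow_one]
      have hq : ∑ j, (x j - (y j : ℂ)) ^ 2 = quad x 0 y := by simp [quad]
      simp only
      rw [← Finset.mul_sum, Finset.sum_add_distrib]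
      have : ∑ j, (x j - (y j : ℂ)) * (-(a : ℂ) * quad x 0 y ^ (-((a + 1 : ℝ) : ℂ)) *
          (2 * (x j - (y j : ℂ)))) =
          (-2 * (a : ℂ) * quad x 0 y ^ (-((a + 1 : ℝ) : ℂ))) * ∑ j, (x j - (y j : ℂ)) ^ 2 := by
        rw [Finset.mul_sum]
        exact Finset.sum_congr rfl fun j _ => by ring
      rw [this, hq]
      simp only [Finset.sum_const, Finset.card_univ, Fintype.card_fin, nsmul_eq_mul]
      rw [hpow]
      push_cast
      ring
    · intro j _
      have := measurable_quad_cpow x 0 (-(a : ℂ))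
      have := measurable_quad_cpow x 0 (-((a + 1 : ℝ) : ℂ))
      refine integrableOn_mul_bounded hΩ hg (by fun_prop)
        (B := κ ^ (-a) + B * (a * κ ^ (-(a + 1)) * (2 * B))) fun y hy => ?_
      have hb := h.bound x hxρ y hy j
      have hB0 : 0 ≤ B := (norm_nonneg _).trans hb
      have e1 := norm_cpow_le h.κ_pos ha (hre y hy)
      have e2 := norm_cpow_le h.κ_pos (by linarith : 0 ≤ a + 1) (hre y hy)
      have e3 : 0 ≤ κ ^ (-(a + 1)) := Real.rpow_nonneg h.κ_pos.le _
      refine (norm_add_le _ _).trans (add_le_add e1 ?_)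
      rw [norm_mul, norm_mul, norm_mul, norm_mul, norm_neg, Complex.norm_real,
        Real.norm_of_nonneg ha, Complex.norm_ofNat]
      gcongr
  have h3 := norm_sum_le (Finset.univ : Finset (Fin n)) (fun j => ∫ y in Ω, (g y : ℂ) *
      (quad x 0 y ^ (-(a : ℂ)) + (x j - (y j : ℂ)) * (-(a : ℂ) *
        quad x 0 y ^ (-((a + 1 : ℝ) : ℂ)) * (2 * (x j - (y j : ℂ))))))
  rw [h2, norm_mul, Complex.norm_real, Real.norm_eq_abs, abs_sub_comm] at h3
  refine h3.trans ((Finset.sum_le_sum fun j _ => h1 j).trans (by simp))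

/-! ### From `τ = 0` to small `τ` -/

lemma prod_shift_pos {b : ℝ} (hb : 0 < b) (k : ℕ) : 0 < ∏ i ∈ Finset.range k, (b + i) :=
  Finset.prod_pos fun i _ => by positivity

/-- Smallness of `pot b` on a polydisc propagates to all `pot (b + k)` on smaller polydiscs: up to
normalisation `pot (b + k + 1)` is the Laplacian of `pot (b + k)`, and each Laplacian costs two
applications of Cauchy's estimate with radius loss `r`. -/
lemma Good.norm_pot_add_le {Ω : Set (EuclideanSpace ℝ (Fin n))} {P : Fin n → ℂ} {ρ κ B : ℝ}
    (h : Good Ω P ρ κ B) (hΩ : MeasurableSet Ω)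
    {g : EuclideanSpace ℝ (Fin n) → ℝ} (hg : IntegrableOn g Ω)
    {b : ℝ} (hb : 2 * b = n + 1) {R r m : ℝ} (hr : 0 < r) (hR : R < ρ)
    (hm : ∀ x ∈ closedBall P R, ‖pot Ω g b x 0‖ ≤ m) (k : ℕ) :
    ∀ x ∈ closedBall P (R - 2 * k * r),
      (∏ i ∈ Finset.range k, (b + i)) * ‖pot Ω g (b + k) x 0‖
        ≤ (n / (4 * r ^ 2)) ^ k / k.factorial * m := by
  have hb0 : 0 < b := by have : (0 : ℝ) ≤ n := Nat.cast_nonneg n; linarith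
  induction k with
  | zero => intro x hx; simpa using hm x (by simpa using hx)
  | succ k ih =>
    intro x hx
    set c := ∏ i ∈ Finset.range k, (b + i) with hc
    have hc0 : 0 < c := prod_shift_pos hb0 k
    set M := (n / (4 * r ^ 2)) ^ k / k.factorial * m with hM
    have hk0 : (0 : ℝ) ≤ k := Nat.cast_nonneg k
    have ha : 0 < b + k := by linarith
    have hxx : x ∈ closedBall P (R - 2 * k * r - r - r) := by
      convert hx using 2; push_cast; ring
    have hM0 : 0 ≤ M := by
      refine le_trans ?_ (ih x (closedBall_subset_closedBall (by linarith) hxx))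
      positivity
    have h1 : ∀ x ∈ closedBall P (R - 2 * k * r), ‖pot Ω g (b + k) x 0‖ ≤ M / c := by
      intro x hx
      rw [le_div_iff₀ hc0, mul_comm]
      exact ih x hx
    have h2 : ∀ i, ∀ x ∈ closedBall P (R - 2 * k * r - r),
        ‖vpot Ω g (b + k + 1) i x‖ ≤ M / c / r / (2 * (b + k)) := by
      intro i x hx
      rw [le_div_iff₀ (by linarith), mul_comm]
      refine h.norm_vpot_succ_le hΩ hg ha.le hr (R := R - 2 * k * r - r) ?_ ?_ i hx
      · nlinarith
      · intro y hy; exact h1 y (by simpa using hy)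
    have h3 := h.norm_pot_le_of_vpot hΩ hg (a := b + k + 1) (by linarith) hr
      (R := R - 2 * k * r - r - r) (m := M / c / r / (2 * (b + k))) (by nlinarith)
      (fun j y hy => h2 j y (by simpa using hy)) hxx
    have e1 : 2 * (b + k + 1) - n = 2 * k + 3 := by linarith
    rw [e1, abs_of_pos (by linarith)] at h3
    rw [Finset.prod_range_succ, ← hc]
    have e2 : b + ((k + 1 : ℕ) : ℝ) = b + k + 1 := by push_cast; ring
    rw [e2]
    set G := ‖pot Ω g (b + k + 1) x 0‖
    have hG : 0 ≤ G := norm_nonneg _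
    have h4 : c * (b + k) * ((2 * k + 3) * G) ≤ n / (2 * r ^ 2) * M := by
      calc c * (b + k) * ((2 * k + 3) * G)
          ≤ c * (b + k) * (n * (M / c / r / (2 * (b + k)) / r)) := by gcongr
        _ = n / (2 * r ^ 2) * M := by field_simp
    have h5 : c * (b + k) * ((2 * (k + 1)) * G) ≤ n / (2 * r ^ 2) * M := by
      refine le_trans ?_ h4
      gcongr
      linarith
    have h6 : (n / (4 * r ^ 2)) ^ (k + 1) / (k + 1).factorial * m
        = (n / (2 * r ^ 2) * M) / (2 * (k + 1)) := by
      rw [hM, Nat.factorial_succ, pow_succ]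
      push_cast
      generalize (n / (4 * r ^ 2)) ^ k = Q
      field_simp
      ring
    rw [h6, le_div_iff₀ (by positivity)]
    linarith

lemma Good.hasDerivAt_pot_tau {Ω : Set (EuclideanSpace ℝ (Fin n))} {P : Fin n → ℂ} {ρ κ B : ℝ}
    (h : Good Ω P ρ κ B) (hΩ : MeasurableSet Ω)
    {g : EuclideanSpace ℝ (Fin n) → ℝ} (hg : IntegrableOn g Ω) {a : ℝ} (ha : 0 ≤ a)
    {x : Fin n → ℂ} (hx : x ∈ ball P ρ) {τ : ℂ} (hτ : τ ∈ ball (0 : ℂ) (ρ ^ 2)) :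
    HasDerivAt (fun τ => pot Ω g a x τ) (-(a : ℂ) * pot Ω g (a + 1) x τ) τ := by
  have := RieszPropagation.hasDerivAt_pot hΩ hg (U := ball (0 : ℂ) (ρ ^ 2)) isOpen_ball h.κ_pos ha
    (X := fun _ => x) (q := 0)
    (fun w i => hasDerivAt_const _ _) (T := fun w => w) (T' := fun _ => 1)
    (fun w => hasDerivAt_id _)
    (fun w hw y hy => h.re_le _ hx w (by simpa using hw) y hy) hτ
  convert this using 1
  unfold pot
  rw [← integral_const_mul]
  congr 1
  ext y
  simp
  ring

/-- The `k`-th `τ`-derivative raises the order of the potential by `k`. -/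
lemma Good.iteratedDeriv_pot {Ω : Set (EuclideanSpace ℝ (Fin n))} {P : Fin n → ℂ} {ρ κ B : ℝ}
    (h : Good Ω P ρ κ B) (hΩ : MeasurableSet Ω)
    {g : EuclideanSpace ℝ (Fin n) → ℝ} (hg : IntegrableOn g Ω) {b : ℝ} (hb : 0 < b)
    {x : Fin n → ℂ} (hx : x ∈ ball P ρ) (k : ℕ) : ∀ τ ∈ ball (0 : ℂ) (ρ ^ 2),
    iteratedDeriv k (fun τ => pot Ω g b x τ) τ =
      (-1) ^ k * ((∏ i ∈ Finset.range k, (b + i) : ℝ) : ℂ) * pot Ω g (b + k) x τ := by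
  induction k with
  | zero => intro τ _; simp
  | succ k ih =>
    intro τ hτ
    rw [iteratedDeriv_succ]
    have : iteratedDeriv k (fun τ => pot Ω g b x τ) =ᶠ[nhds τ] fun τ =>
        (-1) ^ k * ((∏ i ∈ Finset.range k, (b + i) : ℝ) : ℂ) * pot Ω g (b + k) x τ := by
      filter_upwards [isOpen_ball.mem_nhds hτ] with z hz using ih z hz
    rw [this.deriv_eq]
    rw [((h.hasDerivAt_pot_tau hΩ hg (a := b + k) (by positivity) hx hτ).const_mul _).deriv,
      Finset.prod_range_succ]
    have : b + ((k + 1 : ℕ) : ℝ) = b + k + 1 := by push_cast; ring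
    rw [this]
    push_cast
    ring

/-- Passage from `τ = 0` to small `τ`: the Taylor series of `τ ↦ pot b x τ` is truncated after `N`
terms, which are controlled by the data at `τ = 0`. -/
lemma Good.norm_pot_tau_le {Ω : Set (EuclideanSpace ℝ (Fin n))} {P : Fin n → ℂ} {ρ κ B : ℝ}
    (h : Good Ω P ρ κ B) (hΩ : MeasurableSet Ω) (hn : 1 ≤ n)
    {g : EuclideanSpace ℝ (Fin n) → ℝ} (hg : IntegrableOn g Ω)
    {b : ℝ} (hb : 2 * b = n + 1) {R m : ℝ} (hR0 : 0 < R) (hR : R < ρ)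
    (hm : ∀ x ∈ closedBall P R, ‖pot Ω g b x 0‖ ≤ m) (N : ℕ)
    {x : Fin n → ℂ} (hx : x ∈ closedBall P (R / 2)) {τ : ℂ} (hτ : ‖τ‖ ≤ R ^ 2 / (16 * n)) :
    ‖pot Ω g b x τ‖ ≤ Real.exp (2 * N) * m
      + 2 * Real.exp (-N) * (κ ^ (-b) * ∫ y in Ω, |g y|) := by
  have hn' : (1 : ℝ) ≤ n := by exact_mod_cast hn
  have hb0 : 0 < b := by linarith
  have hxρ : x ∈ ball P ρ := closedBall_subset_ball (by linarith) hx
  have hm0 : 0 ≤ m := (norm_nonneg _).trans (hm P (mem_closedBall_self hR0.le))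
  have hτ1 : ‖τ‖ ≤ ρ ^ 2 / 16 := by
    refine hτ.trans ?_
    gcongr
    linarith
  have hρ2 : 0 < ρ ^ 2 := pow_pos h.ρ_pos 2
  set M := κ ^ (-b) * ∫ y in Ω, |g y| with hMdef
  have hM : ∀ z ∈ ball (0 : ℂ) (ρ ^ 2), ‖pot Ω g b x z‖ ≤ M := fun z hz =>
    norm_pot_le hΩ hg h.κ_pos hb0.le fun y hy => h.re_le x hxρ z (by simpa using hz) y hy
  have hM0 : 0 ≤ M := (norm_nonneg _).trans (hM 0 (mem_ball_self hρ2))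
  have hdiff : DifferentiableOn ℂ (fun z => pot Ω g b x z) (ball 0 (ρ ^ 2)) := fun z hz =>
    (h.hasDerivAt_pot_tau hΩ hg hb0.le hxρ hz).differentiableAt.differentiableWithinAt
  have hτb : τ ∈ ball (0 : ℂ) (ρ ^ 2) := by
    rw [mem_ball_zero_iff]; linarith
  have hsum := Complex.hasSum_taylorSeries_on_ball hdiff hτb
  set t : ℕ → ℂ := fun k => ((k.factorial : ℂ))⁻¹ • (τ - 0) ^ k •
    iteratedDeriv k (fun z => pot Ω g b x z) 0 with ht
  have htail : ∀ k, ‖t k‖ ≤ (1 / 8) ^ k * M := by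
    intro k
    have h1 : ‖iteratedDeriv k (fun z => pot Ω g b x z) 0‖
        ≤ k.factorial * M / (ρ ^ 2 / 2) ^ k := by
      have hsub : closedBall (0 : ℂ) (ρ ^ 2 / 2) ⊆ ball 0 (ρ ^ 2) :=
        closedBall_subset_ball (by linarith)
      exact Complex.norm_iteratedDeriv_le_of_forall_mem_sphere_norm_le k (by positivity)
        (hdiff.diffContOnCl_ball hsub) fun z hz => hM z (hsub (sphere_subset_closedBall hz))
    have hk : (0 : ℝ) < k.factorial := by positivity
    rw [ht]
    simp only [norm_smul, norm_inv, Complex.norm_natCast, norm_pow, sub_zero]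
    calc (k.factorial : ℝ)⁻¹ * (‖τ‖ ^ k * ‖iteratedDeriv k (fun z => pot Ω g b x z) 0‖)
        ≤ (k.factorial : ℝ)⁻¹ * ((ρ ^ 2 / 16) ^ k * (k.factorial * M / (ρ ^ 2 / 2) ^ k)) := by
          gcongr
      _ = (1 / 8) ^ k * M := by
          have : (ρ ^ 2 / 16) = (1 / 8) * (ρ ^ 2 / 2) := by ring
          rw [this, mul_pow]
          field_simp
  have hhead : ∀ k ∈ Finset.range N, ‖t k‖ ≤ Real.exp N * ((N : ℝ) ^ k / k.factorial) * m := by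
    intro k hk
    have hkN : k < N := Finset.mem_range.1 hk
    have hN : (0 : ℝ) < N := by exact_mod_cast (Nat.zero_le k).trans_lt hkN
    have hkN' : (k : ℝ) ≤ N := by exact_mod_cast hkN.le
    have hr : 0 < R / (4 * N) := by positivity
    have hxk : x ∈ closedBall P (R - 2 * k * (R / (4 * N))) := by
      refine closedBall_subset_closedBall ?_ hx
      have : 2 * k * (R / (4 * N)) = R / 2 * (k / N) := by field_simp; ring
      rw [this]
      have : (k : ℝ) / N ≤ 1 := (div_le_one hN).2 hkN'
      nlinarith
    have h1 := h.norm_pot_add_le hΩ hg hb hr hR hm k x hxk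
    rw [ht]
    simp only [norm_smul, norm_inv, Complex.norm_natCast, norm_pow, sub_zero]
    rw [h.iteratedDeriv_pot hΩ hg hb0 hxρ k 0 (mem_ball_self hρ2), norm_mul, norm_mul, norm_pow,
      norm_neg, norm_one, one_pow, one_mul, Complex.norm_real,
      Real.norm_of_nonneg (prod_shift_pos hb0 k).le]
    have hq : ‖τ‖ * (n / (4 * (R / (4 * N)) ^ 2)) ≤ (N : ℝ) ^ 2 := by
      calc ‖τ‖ * (n / (4 * (R / (4 * N)) ^ 2))
          ≤ R ^ 2 / (16 * n) * (n / (4 * (R / (4 * N)) ^ 2)) := by gcongr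
        _ = (N : ℝ) ^ 2 / 4 := by field_simp; ring
        _ ≤ (N : ℝ) ^ 2 := by nlinarith [sq_nonneg (N : ℝ)]
    have hk : (0 : ℝ) < k.factorial := by positivity
    calc (k.factorial : ℝ)⁻¹ * (‖τ‖ ^ k *
          ((∏ i ∈ Finset.range k, (b + i)) * ‖pot Ω g (b + k) x 0‖))
        ≤ (k.factorial : ℝ)⁻¹ * (‖τ‖ ^ k *
          ((n / (4 * (R / (4 * N)) ^ 2)) ^ k / k.factorial * m)) := by gcongr
      _ = (‖τ‖ * (n / (4 * (R / (4 * N)) ^ 2))) ^ k / (k.factorial * k.factorial) * m := by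
          rw [mul_pow]; field_simp
      _ ≤ ((N : ℝ) ^ 2) ^ k / (k.factorial * k.factorial) * m := by gcongr
      _ = ((N : ℝ) ^ k / k.factorial) * ((N : ℝ) ^ k / k.factorial) * m := by
          rw [← pow_mul, mul_comm 2 k, pow_mul]; field_simp
      _ ≤ Real.exp N * ((N : ℝ) ^ k / k.factorial) * m := by
          gcongr
          exact Real.pow_div_factorial_le_exp _ hN.le k
  have hgeo : HasSum (fun k : ℕ => (1 / 8 : ℝ) ^ k * ((1 / 8) ^ N * M))
      ((1 - 1 / 8)⁻¹ * ((1 / 8) ^ N * M)) :=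
    (hasSum_geometric_of_lt_one (by norm_num) (by norm_num)).mul_right _
  have hsplit := hsum.summable.sum_add_tsum_nat_add N
  rw [hsum.tsum_eq] at hsplit
  rw [← hsplit]
  refine (norm_add_le _ _).trans (add_le_add ?_ ?_)
  · refine (norm_sum_le _ _).trans ((Finset.sum_le_sum hhead).trans ?_)
    rw [← Finset.sum_mul, ← Finset.mul_sum, two_mul, Real.exp_add]
    gcongr
    exact Real.sum_le_exp_of_nonneg (Nat.cast_nonneg N) N
  · have h1 : ‖∑' k, t (k + N)‖ ≤ (1 - 1 / 8)⁻¹ * ((1 / 8) ^ N * M) := by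
      refine tsum_of_norm_bounded hgeo fun k => ?_
      refine (htail (k + N)).trans (le_of_eq ?_)
      rw [pow_add]; ring
    refine h1.trans ?_
    have h2 : (1 / 8 : ℝ) ^ N ≤ Real.exp (-N) := by
      have : Real.exp (-(N : ℝ)) = (Real.exp (-1)) ^ N := by
        rw [← Real.exp_nat_mul]; ring_nf
      rw [this]
      refine pow_le_pow_left₀ (by norm_num) ?_ N
      rw [Real.exp_neg, one_div]
      exact inv_anti₀ (Real.exp_pos 1) (by linarith [Real.exp_one_lt_three])
    have h3 : (1 - 1 / 8 : ℝ)⁻¹ ≤ 2 := by norm_num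
    calc (1 - 1 / 8 : ℝ)⁻¹ * ((1 / 8) ^ N * M) ≤ 2 * (Real.exp (-N) * M) := by gcongr
      _ = _ := by ring

/-! ### Two-constants estimates in the half-disc -/

/-- The open right half of the unit disc. -/
def halfDisc : Set ℂ := {v | 0 < v.re} ∩ ball 0 1

lemma isOpen_halfDisc : IsOpen halfDisc :=
  (isOpen_lt continuous_const Complex.continuous_re).inter isOpen_ball

lemma closure_halfDisc_subset : closure halfDisc ⊆ {v | 0 ≤ v.re ∧ ‖v‖ ≤ 1} := by
  refine closure_minimal ?_ ?_
  · rintro v ⟨h1, h2⟩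
    exact ⟨le_of_lt h1, (mem_ball_zero_iff.1 h2).le⟩
  · exact (isClosed_le continuous_const Complex.continuous_re).inter
      (isClosed_le continuous_norm continuous_const)

lemma frontier_halfDisc {v : ℂ} (hv : v ∈ frontier halfDisc) :
    0 ≤ v.re ∧ ‖v‖ ≤ 1 ∧ (v.re = 0 ∨ ‖v‖ = 1) := by
  rw [isOpen_halfDisc.frontier_eq] at hv
  obtain ⟨h1, h2⟩ := closure_halfDisc_subset hv.1
  refine ⟨h1, h2, ?_⟩
  by_contra! hcon
  exact hv.2 ⟨lt_of_le_of_ne h1 (Ne.symm hcon.1), mem_ball_zero_iff.2 (lt_of_le_of_ne h2 hcon.2)⟩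

/-- Two-constants theorem in the half-disc for a prescribed comparison function `Re q`: the maximum
principle for `f * exp (t q)`. -/
lemma norm_le_of_weight {f q : ℂ → ℂ} (hf : DiffContOnCl ℂ f halfDisc) (hq : Differentiable ℂ q)
    {t K : ℝ} (hK : ∀ v : ℂ, 0 ≤ v.re → ‖v‖ ≤ 1 → (v.re = 0 ∨ ‖v‖ = 1) →
      ‖f v‖ * Real.exp (t * (q v).re) ≤ K) {z : ℂ} (hz : z ∈ halfDisc) :
    ‖f z‖ ≤ Real.exp (-(t * (q z).re)) * K := by
  have hnorm : ∀ v, ‖f v * Complex.exp (t * q v)‖ = ‖f v‖ * Real.exp (t * (q v).re) := by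
    intro v
    rw [norm_mul, Complex.norm_exp, Complex.re_ofReal_mul]
  have hexp : Differentiable ℂ fun v => Complex.exp (t * q v) := (hq.const_mul _).cexp
  have hd : DiffContOnCl ℂ (fun v => f v * Complex.exp (t * q v)) halfDisc :=
    ⟨hf.1.mul hexp.differentiableOn, hf.2.mul hexp.continuous.continuousOn⟩
  have := Complex.norm_le_of_forall_mem_frontier_norm_le
    (isBounded_ball.subset inter_subset_right) hd (C := K) (fun v hv => by
      rw [hnorm]
      obtain ⟨h1, h2, h3⟩ := frontier_halfDisc hv
      exact hK v h1 h2 h3) (subset_closure hz)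
  rw [hnorm] at this
  rw [Real.exp_neg, inv_mul_eq_div, le_div_iff₀ (Real.exp_pos _)]
  exact this

/-- Smallness on the diameter gives smallness at the interior point `1/8`. -/
lemma norm_le_of_small_diameter {f : ℂ → ℂ} (hf : DiffContOnCl ℂ f halfDisc) {t m M : ℝ}
    (ht : 0 ≤ t) (hm0 : 0 ≤ m) (hM0 : 0 ≤ M)
    (hm : ∀ v : ℂ, v.re = 0 → ‖v‖ ≤ 1 → ‖f v‖ ≤ m)
    (hM : ∀ v : ℂ, 0 ≤ v.re → ‖v‖ = 1 → ‖f v‖ ≤ M) :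
    ‖f (1 / 8)‖ ≤ Real.exp (-(t / 4)) * (M + m * Real.exp (t / 2)) := by
  have hq : Differentiable ℂ fun v : ℂ => 1 / 2 - 2 * v + v ^ 2 := by fun_prop
  have hre : ∀ v : ℂ, (1 / 2 - 2 * v + v ^ 2).re = 1 / 2 - 2 * v.re + (v.re ^ 2 - v.im ^ 2) := by
    intro v
    simp [pow_two]
  have hz : (1 / 8 : ℂ) ∈ halfDisc := by
    refine ⟨by norm_num, ?_⟩
    rw [mem_ball_zero_iff]; norm_num
  have := norm_le_of_weight hf hq (t := t) (K := M + m * Real.exp (t / 2)) ?_ hz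
  · refine this.trans ?_
    gcongr
    rw [hre]
    norm_num
    linarith
  · intro v h1 h2 h3
    rw [hre]
    have hE := Real.exp_pos (t / 2)
    rcases h3 with h3 | h3
    · have : Real.exp (t * (1 / 2 - 2 * v.re + (v.re ^ 2 - v.im ^ 2))) ≤ Real.exp (t / 2) := by
        apply Real.exp_le_exp.2
        rw [h3]
        nlinarith [mul_nonneg ht (sq_nonneg v.im)]
      have h4 := mul_le_mul (hm v h3 h2) this (Real.exp_pos _).le hm0
      linarith
    · have h5 : v.re ^ 2 + v.im ^ 2 = 1 := by
        have := Complex.sq_norm v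
        rw [h3, Complex.normSq_apply] at this
        linarith
      have h6 : v.re ≤ 1 := by nlinarith [sq_nonneg v.im]
      have : Real.exp (t * (1 / 2 - 2 * v.re + (v.re ^ 2 - v.im ^ 2))) ≤ 1 := by
        apply Real.exp_le_one_iff.2
        have : 1 / 2 - 2 * v.re + (v.re ^ 2 - v.im ^ 2) ≤ 0 := by nlinarith
        exact mul_nonpos_of_nonneg_of_nonpos ht this
      have h4 := mul_le_mul (hM v h1 h3) this (Real.exp_pos _).le hM0
      nlinarith [mul_nonneg hm0 hE.le]

/-- Smallness on the circular arc gives quantitative smallness near the midpoint `0` of the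
diameter. -/
lemma norm_le_of_small_arc {f : ℂ → ℂ} (hf : DiffContOnCl ℂ f halfDisc) {t m M c : ℝ}
    (ht : 0 ≤ t) (hm0 : 0 ≤ m) (hM0 : 0 ≤ M) (hc0 : 0 < c) (hc1 : c < 1)
    (hM : ∀ v : ℂ, v.re = 0 → ‖v‖ ≤ 1 → ‖f v‖ ≤ M)
    (hm : ∀ v : ℂ, 0 ≤ v.re → ‖v‖ = 1 → ‖f v‖ ≤ m) :
    ‖f c‖ ≤ Real.exp (-(t * c)) * (M + m * Real.exp t) := by
  have hz : (c : ℂ) ∈ halfDisc := by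
    refine ⟨by simpa using hc0, ?_⟩
    rw [mem_ball_zero_iff, Complex.norm_real, Real.norm_of_nonneg hc0.le]
    exact hc1
  have := norm_le_of_weight hf differentiable_id (t := t) (K := M + m * Real.exp t) ?_ hz
  · simpa using this
  · intro v h1 h2 h3
    have hE := Real.exp_pos t
    rcases h3 with h3 | h3
    · simp only [id, h3, mul_zero, Real.exp_zero, mul_one]
      nlinarith [hM v h3 h2, mul_nonneg hm0 hE.le]
    · have : Real.exp (t * v.re) ≤ Real.exp t := by
        apply Real.exp_le_exp.2
        have : v.re ≤ 1 := (Complex.re_le_norm v).trans h2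
        nlinarith
      have h4 := mul_le_mul (hm v h1 h3) this (Real.exp_pos _).le hm0
      simp only [id]
      linarith

/-! ### Real points and averaging over small balls -/

/-- The inclusion `ℝⁿ → ℂⁿ`. -/
def cplx (x : EuclideanSpace ℝ (Fin n)) : Fin n → ℂ := fun i => (x i : ℂ)

lemma norm_cplx_sub_le (x y : EuclideanSpace ℝ (Fin n)) : ‖cplx x - cplx y‖ ≤ ‖x - y‖ := by
  refine (pi_norm_le_iff_of_nonneg (norm_nonneg _)).2 fun i => ?_
  have : (cplx x - cplx y) i = (((x - y) i : ℝ) : ℂ) := by simp [cplx]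
  rw [this, Complex.norm_real]
  exact PiLp.norm_apply_le _ i

lemma quad_cplx (x y : EuclideanSpace ℝ (Fin n)) (τ : ℝ) :
    quad (cplx x) τ y = ((‖x - y‖ ^ 2 + τ : ℝ) : ℂ) := by
  rw [EuclideanSpace.real_norm_sq_eq]
  simp [quad, cplx]

lemma truncRiesz_eq_vpot (Ω : Set (EuclideanSpace ℝ (Fin n)))
    (g : EuclideanSpace ℝ (Fin n) → ℝ) (j : Fin n) (x : EuclideanSpace ℝ (Fin n)) :
    (truncRiesz n Ω j g x : ℂ) = vpot Ω g (((n : ℝ) + 1) / 2) j (cplx x) := by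
  unfold truncRiesz vpot
  rw [← integral_complex_ofReal]
  congr 1
  ext y
  have h1 := quad_cplx x y 0
  simp only [Complex.ofReal_zero, add_zero] at h1
  rw [h1, ← Complex.ofReal_neg, ← Complex.ofReal_cpow (by positivity)]
  have h2 : (‖x - y‖ ^ 2) ^ (-(((n : ℝ) + 1) / 2)) = (‖x - y‖ ^ (n + 1))⁻¹ := by
    rw [← Real.rpow_natCast, ← Real.rpow_mul (norm_nonneg _), ← Real.rpow_natCast,
      ← Real.rpow_neg (norm_nonneg _)]
    congr 1
    push_cast
    ring
  rw [h2]
  simp [cplx]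
  ring

lemma Qdelta_eq_pot (Ω : Set (EuclideanSpace ℝ (Fin n)))
    (g : EuclideanSpace ℝ (Fin n) → ℝ) (δ : ℝ) (x : EuclideanSpace ℝ (Fin n)) :
    (Qdelta n Ω δ g x : ℂ) = δ * pot Ω g (((n : ℝ) + 1) / 2) (cplx x) ((δ : ℂ) ^ 2) := by
  unfold Qdelta pot
  rw [Complex.ofReal_mul, ← integral_complex_ofReal]
  congr 2
  ext y
  have h1 := quad_cplx x y (δ ^ 2)
  rw [Complex.ofReal_pow] at h1
  rw [h1, ← Complex.ofReal_neg, ← Complex.ofReal_cpow (by positivity)]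
  rw [Complex.ofReal_mul, neg_div]

lemma measurable_truncRiesz (Ω : Set (EuclideanSpace ℝ (Fin n)))
    {g : EuclideanSpace ℝ (Fin n) → ℝ} (hg : Measurable g) (j : Fin n) :
    Measurable (truncRiesz n Ω j g) := by
  unfold truncRiesz
  refine StronglyMeasurable.measurable ?_
  refine StronglyMeasurable.integral_prod_right (ν := volume.restrict Ω)
    (f := fun (x y : EuclideanSpace ℝ (Fin n)) => g y * (x j - y j) / ‖x - y‖ ^ (n + 1)) ?_
  refine Measurable.stronglyMeasurable ?_
  unfold Function.uncurry
  fun_prop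

lemma abs_truncRiesz_le {Ω : Set (EuclideanSpace ℝ (Fin n))} (hΩ : MeasurableSet Ω)
    {g : EuclideanSpace ℝ (Fin n) → ℝ} (hg : IntegrableOn g Ω) (j : Fin n) {d : ℝ} (hd : 0 < d)
    {x : EuclideanSpace ℝ (Fin n)} (hx : ∀ y ∈ Ω, d ≤ ‖x - y‖) :
    |truncRiesz n Ω j g x| ≤ (d ^ n)⁻¹ * ∫ y in Ω, |g y| := by
  unfold truncRiesz
  rw [mul_comm, ← integral_mul_const, ← Real.norm_eq_abs]
  refine norm_integral_le_of_norm_le (hg.abs.mul_const _) ?_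
  filter_upwards [ae_restrict_mem hΩ] with y hy
  have h1 := hx y hy
  have h0 : 0 < ‖x - y‖ := hd.trans_le h1
  have h2 : |x j - y j| ≤ ‖x - y‖ := PiLp.norm_apply_le (x - y) j
  rw [Real.norm_eq_abs, abs_div, abs_mul, abs_of_pos (pow_pos h0 _), mul_div_assoc]
  refine mul_le_mul_of_nonneg_left ?_ (abs_nonneg _)
  calc |x j - y j| / ‖x - y‖ ^ (n + 1) ≤ ‖x - y‖ / ‖x - y‖ ^ (n + 1) := by gcongr
    _ = (‖x - y‖ ^ n)⁻¹ := by rw [pow_succ]; field_simp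
    _ ≤ (d ^ n)⁻¹ := by gcongr

/-- The Lipschitz bound comes from the Schwarz lemma along the complex line through the two points. -/
lemma Good.vpot_lipschitz {Ω : Set (EuclideanSpace ℝ (Fin n))} {P : Fin n → ℂ} {ρ κ B : ℝ}
    (h : Good Ω P ρ κ B) (hΩ : MeasurableSet Ω)
    {g : EuclideanSpace ℝ (Fin n) → ℝ} (hg : IntegrableOn g Ω) {a : ℝ} (ha : 0 ≤ a) (j : Fin n)
    {x x' : Fin n → ℂ} {s : ℝ} (hs : 0 < s) (hsρ : s < ρ / 2) (hx : x ∈ closedBall P (ρ / 2))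
    (hxx : ‖x' - x‖ ≤ s) :
    ‖vpot Ω g a j x' - vpot Ω g a j x‖ ≤ 4 * (B * κ ^ (-a) * ∫ y in Ω, |g y|) / ρ * s := by
  have hρ := h.ρ_pos
  set M := B * κ ^ (-a) * ∫ y in Ω, |g y| with hM
  set q : Fin n → ℂ := ((s : ℂ))⁻¹ • (x' - x) with hq
  have hs' : (s : ℂ) ≠ 0 := by exact_mod_cast hs.ne'
  have hq1 : ‖q‖ ≤ 1 := by
    rw [hq, norm_smul, norm_inv, Complex.norm_real, Real.norm_of_nonneg hs.le]
    rw [inv_mul_le_iff₀ hs]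
    simpa using hxx
  have hmem : ∀ w ∈ ball (0 : ℂ) (ρ / 2), x + w • q ∈ ball P ρ := by
    intro w hw
    rw [mem_ball_zero_iff] at hw
    rw [mem_closedBall_iff_norm] at hx
    rw [mem_ball_iff_norm]
    have h1 : ‖w • q‖ ≤ ‖w‖ := by
      rw [norm_smul]
      nlinarith [norm_nonneg w, norm_nonneg q]
    calc ‖x + w • q - P‖ = ‖(x - P) + w • q‖ := by congr 1; abel
      _ ≤ ‖x - P‖ + ‖w • q‖ := norm_add_le _ _
      _ < ρ := by linarith
  have hx0 : x + (0 : ℂ) • q = x := by simp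
  have hx1 : x + (s : ℂ) • q = x' := by
    rw [hq, smul_smul, mul_inv_cancel₀ hs', one_smul]; abel
  have hxb : x ∈ ball P ρ := by
    have := hmem 0 (mem_ball_self (by positivity))
    rwa [hx0] at this
  have hsb : (s : ℂ) ∈ ball (0 : ℂ) (ρ / 2) := by
    rw [mem_ball_zero_iff, Complex.norm_real, Real.norm_of_nonneg hs.le]; exact hsρ
  have := Complex.dist_le_div_mul_dist_of_mapsTo_ball (f := fun w : ℂ => vpot Ω g a j (x + w • q))
    (c := 0) (R₁ := ρ / 2) (R₂ := 2 * M) (z := (s : ℂ))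
    (fun w hw => (h.hasDerivAt_vpot hΩ hg ha j x q
      (hmem w hw)).differentiableAt.differentiableWithinAt) ?_ hsb
  · simp only [hx0, hx1, dist_eq_norm, sub_zero, Complex.norm_real,
      Real.norm_of_nonneg hs.le] at this
    refine this.trans (le_of_eq ?_)
    field_simp
    ring
  · intro w hw
    rw [mem_closedBall, dist_eq_norm]
    simp only [hx0]
    refine (norm_sub_le _ _).trans ?_
    have h1 := h.norm_vpot_le hΩ hg ha j (hmem w hw)
    have h2 := h.norm_vpot_le hΩ hg ha j hxb
    rw [← hM] at h1 h2
    linarith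

/-- The square root of the data term. -/
noncomputable def dataNorm (Ω₁ Ω₂ : Set (EuclideanSpace ℝ (Fin n)))
    (g : EuclideanSpace ℝ (Fin n) → ℝ) : ℝ :=
  Real.sqrt (∑ j : Fin n, ∫ x in Ω₁, (truncRiesz n Ω₂ j g x) ^ 2)

lemma setIntegral_truncRiesz_le (Ω₁ Ω₂ : Set (EuclideanSpace ℝ (Fin n)))
    (g : EuclideanSpace ℝ (Fin n) → ℝ) (j : Fin n) :
    ∫ x in Ω₁, (truncRiesz n Ω₂ j g x) ^ 2 ≤ dataNorm Ω₁ Ω₂ g ^ 2 := by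
  have h : ∀ j ∈ (Finset.univ : Finset (Fin n)), 0 ≤ ∫ x in Ω₁, (truncRiesz n Ω₂ j g x) ^ 2 :=
    fun j _ => integral_nonneg fun x => sq_nonneg _
  rw [dataNorm, Real.sq_sqrt (Finset.sum_nonneg h)]
  exact Finset.single_le_sum h (Finset.mem_univ j)

/-- From the `L²` norm on `Ω₁` to a pointwise bound, by averaging over a ball of radius `s` and
using the Lipschitz bound. -/
lemma Good.abs_truncRiesz_le_data {Ω₁ Ω₂ : Set (EuclideanSpace ℝ (Fin n))}
    {x₁ : EuclideanSpace ℝ (Fin n)} {ρ κ B d : ℝ}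
    (h : Good Ω₂ (cplx x₁) ρ κ B) (hΩ₂ : MeasurableSet Ω₂) (hΩ₁ : MeasurableSet Ω₁)
    (hΩ₁v : volume Ω₁ ≠ ⊤) (hd : 0 < d) (hdist : ∀ x ∈ Ω₁, ∀ y ∈ Ω₂, d ≤ ‖x - y‖)
    (hsub : ∀ x, cplx x ∈ ball (cplx x₁) ρ → x ∈ Ω₁)
    {g : EuclideanSpace ℝ (Fin n) → ℝ} (hgm : Measurable g) (hg : IntegrableOn g Ω₂) (j : Fin n)
    {x : EuclideanSpace ℝ (Fin n)} {s : ℝ} (hs : 0 < s) (hsρ : s < ρ / 2)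
    (hx : cplx x ∈ closedBall (cplx x₁) (ρ / 2)) :
    |truncRiesz n Ω₂ j g x| ≤ dataNorm Ω₁ Ω₂ g / Real.sqrt (volume.real (ball x s))
      + 4 * (B * κ ^ (-(((n : ℝ) + 1) / 2)) * ∫ y in Ω₂, |g y|) / ρ * s := by
  have hb : (0 : ℝ) ≤ ((n : ℝ) + 1) / 2 := by positivity
  set K := 4 * (B * κ ^ (-(((n : ℝ) + 1) / 2)) * ∫ y in Ω₂, |g y|) / ρ * s with hK
  by_contra! hcon
  set E := dataNorm Ω₁ Ω₂ g with hE
  have hE0 : 0 ≤ E := Real.sqrt_nonneg _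
  set A := |truncRiesz n Ω₂ j g x| - K with hA
  set V := volume.real (ball x s) with hV
  have hV0 : 0 < V := by
    rw [hV, Measure.real]
    exact ENNReal.toReal_pos (measure_ball_pos _ _ hs).ne' measure_ball_lt_top.ne
  have hAE : E / Real.sqrt V < A := by linarith
  have hA0 : 0 ≤ A := le_trans (by positivity) hAE.le
  have hlow : ∀ y ∈ ball x s, A ^ 2 ≤ (truncRiesz n Ω₂ j g y) ^ 2 := by
    intro y hy
    rw [mem_ball_iff_norm] at hy
    have h1 := h.vpot_lipschitz hΩ₂ hg hb j hs hsρ hx ((norm_cplx_sub_le y x).trans hy.le)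
    rw [← truncRiesz_eq_vpot, ← truncRiesz_eq_vpot, ← Complex.ofReal_sub, Complex.norm_real,
      Real.norm_eq_abs, ← hK] at h1
    rw [← sq_abs (truncRiesz n Ω₂ j g y)]
    have h2 := abs_sub_abs_le_abs_sub (truncRiesz n Ω₂ j g x) (truncRiesz n Ω₂ j g y)
    rw [abs_sub_comm] at h2
    exact pow_le_pow_left₀ hA0 (by linarith) 2
  have hballsub : ball x s ⊆ Ω₁ := by
    intro y hy
    rw [mem_ball_iff_norm] at hy
    apply hsub
    rw [mem_closedBall_iff_norm] at hx
    rw [mem_ball_iff_norm]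
    have := norm_cplx_sub_le y x
    have h3 := norm_sub_le_norm_sub_add_norm_sub (cplx y) (cplx x) (cplx x₁)
    linarith
  have hint : IntegrableOn (fun y => (truncRiesz n Ω₂ j g y) ^ 2) Ω₁ := by
    refine Measure.integrableOn_of_bounded (M := ((d ^ n)⁻¹ * ∫ y in Ω₂, |g y|) ^ 2) hΩ₁v
      ((measurable_truncRiesz Ω₂ hgm j).pow_const 2).aestronglyMeasurable ?_
    filter_upwards [ae_restrict_mem hΩ₁] with y hy
    rw [Real.norm_eq_abs, abs_pow]
    exact pow_le_pow_left₀ (abs_nonneg _) (abs_truncRiesz_le hΩ₂ hg j hd (hdist y hy)) 2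
  have h4 : A ^ 2 * V ≤ ∫ y in ball x s, (truncRiesz n Ω₂ j g y) ^ 2 := by
    have : ∫ _y in ball x s, A ^ 2 = A ^ 2 * V := by
      rw [setIntegral_const, smul_eq_mul, mul_comm]
    rw [← this]
    exact setIntegral_mono_on (integrableOn_const measure_ball_lt_top.ne)
      (hint.mono_set hballsub) measurableSet_ball hlow
  have h5 : ∫ y in ball x s, (truncRiesz n Ω₂ j g y) ^ 2
      ≤ ∫ y in Ω₁, (truncRiesz n Ω₂ j g y) ^ 2 :=
    setIntegral_mono_set hint (ae_of_all _ fun y => sq_nonneg _) hballsub.eventuallyLE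
  have h6 := setIntegral_truncRiesz_le Ω₁ Ω₂ g j
  rw [div_lt_iff₀ (Real.sqrt_pos.2 hV0)] at hAE
  have h7 : E ^ 2 < (A * Real.sqrt V) ^ 2 := pow_lt_pow_left₀ hAE hE0 (by norm_num)
  rw [mul_pow, Real.sq_sqrt hV0.le] at h7
  linarith

/-! ### Propagation to a complex neighbourhood of `(x₁, 0)` -/

/-- The geometric situation: a polydisc around the point `x₁` whose real points lie in `Ω₁`, at
positive distance from `Ω₂`. -/
structure Setup (Ω₁ Ω₂ : Set (EuclideanSpace ℝ (Fin n))) (x₁ : EuclideanSpace ℝ (Fin n))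
    (ρ κ B d : ℝ) : Prop where
  good : Good Ω₂ (cplx x₁) ρ κ B
  meas₁ : MeasurableSet Ω₁
  meas₂ : MeasurableSet Ω₂
  finite₁ : volume Ω₁ ≠ ⊤
  d_pos : 0 < d
  dist_le : ∀ x ∈ Ω₁, ∀ y ∈ Ω₂, d ≤ ‖x - y‖
  sub : ∀ x, cplx x ∈ ball (cplx x₁) ρ → x ∈ Ω₁
  bound_nonneg : 0 ≤ B

variable {Ω₁ Ω₂ : Set (EuclideanSpace ℝ (Fin n))} {x₁ : EuclideanSpace ℝ (Fin n)} {ρ κ B d : ℝ}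

lemma dataNorm_nonneg (g : EuclideanSpace ℝ (Fin n) → ℝ) : 0 ≤ dataNorm Ω₁ Ω₂ g :=
  Real.sqrt_nonneg _

lemma integral_abs_nonneg (g : EuclideanSpace ℝ (Fin n) → ℝ) : 0 ≤ ∫ y in Ω₂, |g y| :=
  integral_nonneg fun _ => abs_nonneg _

/-- Pointwise smallness of the data at real points: averaging over a ball of radius
`ρ / 4 * exp (-N)`, whose volume accounts for the factor `exp (α * N)` with `α = n / 2`. -/
lemma Setup.truncRiesz_small (h : Setup Ω₁ Ω₂ x₁ ρ κ B d) :
    ∃ A α D : ℝ, 0 ≤ A ∧ 0 ≤ α ∧ 0 ≤ D ∧ ∀ g : EuclideanSpace ℝ (Fin n) → ℝ, Measurable g →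
      IntegrableOn g Ω₂ → ∀ (N : ℕ) (j : Fin n) (x : EuclideanSpace ℝ (Fin n)),
      cplx x ∈ closedBall (cplx x₁) (ρ / 2) → |truncRiesz n Ω₂ j g x|
        ≤ A * Real.exp (α * N) * dataNorm Ω₁ Ω₂ g + D * Real.exp (-N) * ∫ y in Ω₂, |g y| := by
  have hρ := h.good.ρ_pos
  have hκ := h.good.κ_pos
  set v := volume.real (ball (0 : EuclideanSpace ℝ (Fin n)) 1) with hv
  refine ⟨(Real.sqrt ((ρ / 4) ^ n * v))⁻¹, n / 2, B * κ ^ (-(((n : ℝ) + 1) / 2)),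
    by positivity, by positivity, mul_nonneg h.bound_nonneg (by positivity),
    fun g hgm hg N j x hx => ?_⟩
  have hs : 0 < ρ / 4 * Real.exp (-N) := by positivity
  have he : Real.exp (-(N : ℝ)) ≤ 1 := Real.exp_le_one_iff.2 (by simp)
  have h1 := h.good.abs_truncRiesz_le_data h.meas₂ h.meas₁ h.finite₁ h.d_pos h.dist_le h.sub
    hgm hg j hs (by nlinarith) hx
  refine h1.trans (le_of_eq ?_)
  have hvol : volume.real (ball x (ρ / 4 * Real.exp (-N)))
      = ((ρ / 4) ^ n * v) * (Real.exp (-(n / 2 * N))) ^ 2 := by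
    rw [Measure.real, Measure.addHaar_ball_of_pos _ _ hs, ENNReal.toReal_mul,
      ENNReal.toReal_ofReal (by positivity), finrank_euclideanSpace_fin, ← Measure.real, ← hv,
      mul_pow, ← Real.exp_nat_mul, ← Real.exp_nat_mul]
    rw [show (n : ℝ) * -(N : ℝ) = ((2 : ℕ) : ℝ) * -(n / 2 * N) by push_cast; ring]
    ring
  rw [hvol, Real.sqrt_mul' _ (by positivity), Real.sqrt_sq (by positivity)]
  congr 1
  · rw [Real.exp_neg]
    field_simp
  · field_simp

/-- Propagation from real points to a complex polydisc. -/
lemma Setup.vpot_small (h : Setup Ω₁ Ω₂ x₁ ρ κ B d) :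
    ∃ A α D : ℝ, 0 ≤ A ∧ 0 ≤ α ∧ 0 ≤ D ∧ ∀ g : EuclideanSpace ℝ (Fin n) → ℝ, Measurable g →
      IntegrableOn g Ω₂ → ∀ (N : ℕ) (j : Fin n), ∀ x ∈ closedBall (cplx x₁) (ρ / 32),
      ‖vpot Ω₂ g (((n : ℝ) + 1) / 2) j x‖
        ≤ A * Real.exp (α * N) * dataNorm Ω₁ Ω₂ g + D * Real.exp (-N) * ∫ y in Ω₂, |g y| := by
  obtain ⟨A, α, D, hA, hα, hD, H⟩ := h.truncRiesz_small
  have hρ := h.good.ρ_pos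
  have hκ := h.good.κ_pos
  have hB := h.bound_nonneg
  set M₀ := B * κ ^ (-(((n : ℝ) + 1) / 2)) with hM₀
  have hM₀0 : 0 ≤ M₀ := by positivity
  refine ⟨A, 3 * α + 1, D + M₀, hA, by positivity, by positivity, fun g hgm hg N j X hX => ?_⟩
  have hb : (0 : ℝ) ≤ ((n : ℝ) + 1) / 2 := by positivity
  set E := dataNorm Ω₁ Ω₂ g with hE
  set L := ∫ y in Ω₂, |g y| with hL
  have hE0 : 0 ≤ E := dataNorm_nonneg g
  have hL0 : 0 ≤ L := integral_abs_nonneg g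
  set P := cplx x₁ with hP
  set x : EuclideanSpace ℝ (Fin n) := WithLp.toLp 2 fun i => (X i).re with hx
  -- scaling by `8` places `X` at the parameter `v = 1 / 8`
  set q : Fin n → ℂ := fun i => 8 * Complex.I * (X i).im with hq
  have hXi : ∀ i, ‖X i - (x₁ i : ℂ)‖ ≤ ρ / 32 := fun i => by
    rw [mem_closedBall_iff_norm] at hX
    exact (norm_le_pi_norm (X - P) i).trans hX
  have hpP : ‖cplx x - P‖ ≤ ρ / 32 := by
    refine (pi_norm_le_iff_of_nonneg (by positivity)).2 fun i => ?_
    have : (cplx x - P) i = (((X i - (x₁ i : ℂ)).re : ℝ) : ℂ) := by simp [cplx, hx, hP]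
    rw [this, Complex.norm_real, Real.norm_eq_abs]
    exact (Complex.abs_re_le_norm _).trans (hXi i)
  have hqn : ‖q‖ ≤ ρ / 4 := by
    refine (pi_norm_le_iff_of_nonneg (by positivity)).2 fun i => ?_
    have h1 : |(X i).im| ≤ ρ / 32 := by
      have := (Complex.abs_im_le_norm _).trans (hXi i)
      simpa using this
    simp only [hq, norm_mul, Complex.norm_I, Complex.norm_real, Real.norm_eq_abs]
    norm_num
    linarith
  have hline : ∀ v : ℂ, ‖cplx x + v • q - P‖ ≤ ρ / 32 + ‖v‖ * (ρ / 4) := by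
    intro v
    calc ‖cplx x + v • q - P‖ = ‖(cplx x - P) + v • q‖ := by congr 1; abel
      _ ≤ ‖cplx x - P‖ + ‖v • q‖ := norm_add_le _ _
      _ ≤ ρ / 32 + ‖v‖ * (ρ / 4) := by
        rw [norm_smul]
        gcongr
  have hball : ∀ v : ℂ, ‖v‖ ≤ 1 → cplx x + v • q ∈ ball P ρ := by
    intro v hv
    rw [mem_ball_iff_norm]
    have := hline v
    nlinarith
  set f : ℂ → ℂ := fun v => vpot Ω₂ g (((n : ℝ) + 1) / 2) j (cplx x + v • q) with hf
  have hdiff : ∀ v ∈ closure halfDisc, DifferentiableAt ℂ f v := fun v hv =>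
    (h.good.hasDerivAt_vpot h.meas₂ hg hb j (cplx x) q
      (hball v (closure_halfDisc_subset hv).2)).differentiableAt
  have hDC : DiffContOnCl ℂ f halfDisc :=
    ⟨fun v hv => (hdiff v (subset_closure hv)).differentiableWithinAt,
      fun v hv => (hdiff v hv).continuousAt.continuousWithinAt⟩
  set m := A * Real.exp (α * (3 * N : ℕ)) * E + D * Real.exp (-(3 * N : ℕ)) * L with hm
  have hm0 : 0 ≤ m := by positivity
  have key := norm_le_of_small_diameter hDC (t := 4 * N) (m := m) (M := M₀ * L) (by positivity)
    hm0 (by positivity) ?_ ?_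
  · have hX8 : cplx x + (1 / 8 : ℂ) • q = X := by
      ext i
      simp only [Pi.add_apply, Pi.smul_apply, cplx, hx, hq, smul_eq_mul]
      conv_rhs => rw [← Complex.re_add_im (X i)]
      ring
    simp only [hf, hX8] at key
    refine key.trans ?_
    have e1 : Real.exp (-(4 * (N : ℝ) / 4)) = Real.exp (-N) := by congr 1; ring
    have e2 : Real.exp (-(N : ℝ)) * (Real.exp (α * (3 * N : ℕ)) * Real.exp (4 * N / 2))
        = Real.exp ((3 * α + 1) * N) := by
      rw [← Real.exp_add, ← Real.exp_add]; congr 1; push_cast; ring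
    have e3 : Real.exp (-((3 * N : ℕ) : ℝ)) * Real.exp (4 * N / 2) ≤ 1 := by
      rw [← Real.exp_add]; apply Real.exp_le_one_iff.2; push_cast; linarith [N.cast_nonneg (α := ℝ)]
    rw [e1, hm]
    calc Real.exp (-N) * (M₀ * L + (A * Real.exp (α * (3 * N : ℕ)) * E
          + D * Real.exp (-(3 * N : ℕ)) * L) * Real.exp (4 * N / 2))
        = A * (Real.exp (-(N : ℝ)) * (Real.exp (α * (3 * N : ℕ)) * Real.exp (4 * N / 2))) * E
          + (M₀ + D * (Real.exp (-((3 * N : ℕ) : ℝ)) * Real.exp (4 * N / 2)))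
            * Real.exp (-N) * L := by ring
      _ ≤ A * Real.exp ((3 * α + 1) * N) * E + (M₀ + D * 1) * Real.exp (-N) * L := by
        rw [e2]; gcongr
      _ = _ := by ring
  · intro v hv hv1
    set u : EuclideanSpace ℝ (Fin n) := WithLp.toLp 2 fun i => (X i).re - 8 * v.im * (X i).im
      with hu
    have hvI : v = v.im * Complex.I := by
      conv_lhs => rw [← Complex.re_add_im v, hv]
      simp
    have hreal : cplx x + v • q = cplx u := by
      ext i
      simp only [Pi.add_apply, Pi.smul_apply, cplx, hx, hq, hu, smul_eq_mul]
      conv_lhs => rw [hvI]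
      push_cast
      linear_combination 8 * (v.im : ℂ) * (X i).im * Complex.I_mul_I
    have hmem : cplx u ∈ closedBall P (ρ / 2) := by
      rw [← hreal, mem_closedBall_iff_norm]
      have := hline v
      nlinarith
    simp only [hf, hreal]
    rw [← truncRiesz_eq_vpot, Complex.norm_real, Real.norm_eq_abs]
    exact H g hgm hg (3 * N) j u hmem
  · intro v _ hv1
    exact h.good.norm_vpot_le h.meas₂ hg hb j (hball v hv1.le)

/-- Smallness of the scalar potential at `τ = 0`: for the order `a = (n + 1) / 2` the factor
`2 * a - n` in the divergence identity equals `1`. -/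
lemma Setup.pot_small (h : Setup Ω₁ Ω₂ x₁ ρ κ B d) :
    ∃ A α D : ℝ, 0 ≤ A ∧ 0 ≤ α ∧ 0 ≤ D ∧ ∀ g : EuclideanSpace ℝ (Fin n) → ℝ, Measurable g →
      IntegrableOn g Ω₂ → ∀ N : ℕ, ∀ x ∈ closedBall (cplx x₁) (ρ / 64),
      ‖pot Ω₂ g (((n : ℝ) + 1) / 2) x 0‖
        ≤ A * Real.exp (α * N) * dataNorm Ω₁ Ω₂ g + D * Real.exp (-N) * ∫ y in Ω₂, |g y| := by
  obtain ⟨A, α, D, hA, hα, hD, H⟩ := h.vpot_small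
  have hρ := h.good.ρ_pos
  refine ⟨n / (ρ / 64) * A, α, n / (ρ / 64) * D, by positivity, hα, by positivity,
    fun g hgm hg N X hX => ?_⟩
  have h1 := h.good.norm_pot_le_of_vpot h.meas₂ hg (a := ((n : ℝ) + 1) / 2) (by positivity)
    (R := ρ / 64) (r := ρ / 64) (by positivity) (by linarith)
    (fun j x hx => H g hgm hg N j x (closedBall_subset_closedBall (by linarith) hx)) hX
  rw [show 2 * (((n : ℝ) + 1) / 2) - n = 1 by ring, abs_one, one_mul] at h1
  refine h1.trans (le_of_eq ?_)
  ring

/-- Smallness of the potential of the extension near the point `(x₁, 0)`, in terms of the complex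
variables `x` and `τ = t²`. -/
lemma Setup.pot_tau_small (h : Setup Ω₁ Ω₂ x₁ ρ κ B d) (hn : 1 ≤ n) :
    ∃ A α D : ℝ, 0 ≤ A ∧ 0 ≤ α ∧ 0 ≤ D ∧ ∀ g : EuclideanSpace ℝ (Fin n) → ℝ, Measurable g →
      IntegrableOn g Ω₂ → ∀ N : ℕ, ∀ x ∈ closedBall (cplx x₁) (ρ / 128),
      ∀ τ : ℂ, ‖τ‖ ≤ (ρ / 64) ^ 2 / (16 * n) →
      ‖pot Ω₂ g (((n : ℝ) + 1) / 2) x τ‖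
        ≤ A * Real.exp (α * N) * dataNorm Ω₁ Ω₂ g + D * Real.exp (-N) * ∫ y in Ω₂, |g y| := by
  obtain ⟨A, α, D, hA, hα, hD, H⟩ := h.pot_small
  have hρ := h.good.ρ_pos
  have hκ := h.good.κ_pos
  set K := κ ^ (-(((n : ℝ) + 1) / 2)) with hK
  have hK0 : 0 ≤ K := by positivity
  refine ⟨A, 3 * α + 2, D + 2 * K, by positivity, by positivity, by positivity,
    fun g hgm hg N X hX τ hτ => ?_⟩
  have h1 := h.good.norm_pot_tau_le h.meas₂ hn hg (b := ((n : ℝ) + 1) / 2) (by ring)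
    (R := ρ / 64) (by positivity) (by linarith) (H g hgm hg (3 * N)) N
    (closedBall_subset_closedBall (by linarith) hX) hτ
  refine h1.trans (le_of_eq ?_)
  have e1 : Real.exp ((3 * α + 2) * N) = Real.exp (2 * N) * Real.exp (α * (3 * N : ℕ)) := by
    rw [← Real.exp_add]; congr 1; push_cast; ring
  have e2 : Real.exp (-(N : ℝ)) = Real.exp (2 * N) * Real.exp (-(3 * N : ℕ)) := by
    rw [← Real.exp_add]; congr 1; push_cast; ring
  rw [e1, mul_add, ← hK]
  linear_combination (-(D * ∫ y in Ω₂, |g y|)) * e2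

/-! ### The `p`-th root and the complexified segment -/

lemma cpow_inv_polar {v : ℂ} (hv : v ≠ 0) (p : ℕ) :
    v ^ ((p : ℂ)⁻¹) = (Real.exp (Real.log ‖v‖ / p) : ℂ) * Complex.exp (Complex.I * (v.arg / p : ℝ)) := by
  rw [Complex.cpow_def_of_ne_zero hv, Complex.ofReal_exp, ← Complex.exp_add, Complex.log]
  congr 1
  push_cast
  ring

lemma abs_arg_div_le {v : ℂ} (hv : 0 ≤ v.re) {p : ℕ} (hp : 2 ≤ p) : |v.arg / p| ≤ 2 / p := by
  have hp0 : (0 : ℝ) < p := by positivity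
  rw [abs_div, abs_of_pos hp0]
  have := Complex.abs_arg_le_pi_div_two_iff.2 hv
  gcongr
  linarith [Real.pi_le_four]

/-- The `p`-th root maps the right half-plane into a thin sector around the positive axis. -/
lemma abs_im_cpow_inv_le {v : ℂ} (hv : 0 ≤ v.re) {p : ℕ} (hp : 2 ≤ p) :
    |(v ^ ((p : ℂ)⁻¹)).im| ≤ 4 / p * (v ^ ((p : ℂ)⁻¹)).re ∧ 0 ≤ (v ^ ((p : ℂ)⁻¹)).re := by
  rcases eq_or_ne v 0 with rfl | hv0
  · have : ((p : ℂ)⁻¹) ≠ 0 := inv_ne_zero (by exact_mod_cast (by omega : p ≠ 0))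
    simp [Complex.zero_cpow this]
  have hp0 : (2 : ℝ) ≤ p := by exact_mod_cast hp
  have hφ := abs_arg_div_le hv hp
  have hφ1 : |v.arg / p| ≤ Real.pi / 4 := by
    rw [abs_div, abs_of_pos (by linarith : (0 : ℝ) < p)]
    have := Complex.abs_arg_le_pi_div_two_iff.2 hv
    rw [div_le_div_iff₀ (by linarith) (by norm_num)]
    nlinarith [Real.pi_pos]
  rw [cpow_inv_polar hv0, mul_comm Complex.I]
  set φ := v.arg / p with hφd
  set r := Real.exp (Real.log ‖v‖ / p) with hr
  have hr0 : 0 ≤ r := (Real.exp_pos _).le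
  have hcos : 1 / 2 ≤ Real.cos φ := by
    rw [← Real.cos_abs, ← Real.cos_pi_div_three]
    exact Real.cos_le_cos_of_nonneg_of_le_pi (abs_nonneg _) (by linarith [Real.pi_pos])
      (by linarith [Real.pi_pos])
  have hsin : |Real.sin φ| ≤ |φ| := Real.abs_sin_le_abs
  rw [Complex.re_ofReal_mul, Complex.im_ofReal_mul, Complex.exp_ofReal_mul_I_re,
    Complex.exp_ofReal_mul_I_im, abs_mul, abs_of_nonneg hr0]
  refine ⟨?_, by positivity⟩
  have h2 : |Real.sin φ| ≤ 4 / p * Real.cos φ := by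
    have h3 : (0 : ℝ) ≤ 4 / p := by positivity
    have h4 : (2 : ℝ) / p = 4 / p * (1 / 2) := by ring
    nlinarith
  nlinarith

lemma norm_cpow_inv_le {v : ℂ} (hv : ‖v‖ ≤ 1) {p : ℕ} (hp : p ≠ 0) : ‖v ^ ((p : ℂ)⁻¹)‖ ≤ 1 := by
  have h : ‖v ^ ((p : ℂ)⁻¹)‖ ^ p = ‖v‖ := by rw [← norm_pow, Complex.cpow_nat_inv_pow _ hp]
  by_contra! hc
  have := one_lt_pow₀ hc hp
  linarith

lemma norm_cpow_inv_sub_one_le {v : ℂ} (hv : 0 ≤ v.re) (hv1 : ‖v‖ = 1) {p : ℕ} (hp : 2 ≤ p) :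
    ‖v ^ ((p : ℂ)⁻¹) - 1‖ ≤ 2 / p := by
  have hv0 : v ≠ 0 := by rintro rfl; simp at hv1
  rw [cpow_inv_polar hv0, hv1]
  simp only [Real.log_one, zero_div, Real.exp_zero, Complex.ofReal_one, one_mul]
  exact (Real.norm_exp_I_mul_ofReal_sub_one_le).trans (abs_arg_div_le hv hp)

lemma ofReal_pow_cpow_inv {a : ℝ} (ha : 0 ≤ a) {p : ℕ} (hp : p ≠ 0) :
    ((a ^ p : ℝ) : ℂ) ^ ((p : ℂ)⁻¹) = a := by
  have h := Real.pow_rpow_inv_natCast ha hp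
  rw [show ((p : ℂ)⁻¹) = (((p : ℝ)⁻¹ : ℝ) : ℂ) by push_cast; rfl,
    ← Complex.ofReal_cpow (by positivity), h]

/-- A function holomorphic on an open set containing the `p`-th roots of the closed half-disc
gives, after composition with the `p`-th root, a function to which the maximum principle on the
half-disc applies. -/
lemma diffContOnCl_comp_root {F : ℂ → ℂ} {p : ℕ} (hp : p ≠ 0)
    (hF : ∀ v : ℂ, 0 ≤ v.re → ‖v‖ ≤ 1 → DifferentiableAt ℂ F (v ^ ((p : ℂ)⁻¹))) :
    DiffContOnCl ℂ (fun v => F (v ^ ((p : ℂ)⁻¹))) halfDisc := by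
  refine ⟨fun v hv => ?_, fun v hv => ?_⟩
  · have h1 := closure_halfDisc_subset (subset_closure hv)
    have h2 : DifferentiableAt ℂ (fun v : ℂ => v ^ ((p : ℂ)⁻¹)) v :=
      differentiableAt_id.cpow_const (Or.inl hv.1)
    exact ((hF v h1.1 h1.2).comp v h2).differentiableWithinAt
  · have h1 := closure_halfDisc_subset hv
    have h2 : ContinuousAt (fun v : ℂ => v ^ ((p : ℂ)⁻¹)) v := by
      refine Complex.continuousAt_cpow_const_of_re_pos (Or.inl h1.1) ?_
      have hp0 : (0 : ℝ) < p := by exact_mod_cast Nat.pos_of_ne_zero hp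
      rw [show ((p : ℂ)⁻¹) = (((p : ℝ)⁻¹ : ℝ) : ℂ) by push_cast; rfl, Complex.ofReal_re]
      positivity
    exact (ContinuousAt.comp (f := fun v : ℂ => v ^ ((p : ℂ)⁻¹)) (g := F)
      (hF v h1.1 h1.2).continuousAt h2).continuousWithinAt

/-- Along the complexified segment from `x₁` to `x` the imaginary parts cost at most a multiple of
`(Im w)²`, while the height contributes the square of its real part. -/
lemma quad_line_re_ge {x x₁ : EuclideanSpace ℝ (Fin n)} (y : EuclideanSpace ℝ (Fin n)) (w : ℂ)
    {k s t₀ D₀ : ℝ} (hk0 : 0 ≤ k) (hk : k ≤ 4 / 3) (hs : |s| ≤ 4 / 3) (hx : ‖x - x₁‖ ≤ D₀) :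
    (t₀ + (w.re - 1) * s) ^ 2 - 16 / 9 * (1 + D₀ ^ 2) * w.im ^ 2
      ≤ (quad (fun i => (x₁ i : ℂ) + (k * (1 - w)) * ((x i : ℂ) - x₁ i))
          ((t₀ + (w - 1) * s) ^ 2) y).re := by
  have h1 : (quad (fun i => (x₁ i : ℂ) + (k * (1 - w)) * ((x i : ℂ) - x₁ i))
      ((t₀ + (w - 1) * s) ^ 2) y).re = ∑ i, ((x₁ i + k * (1 - w.re) * (x i - x₁ i) - y i) ^ 2
        - w.im ^ 2 * k ^ 2 * (x - x₁) i ^ 2)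
        + ((t₀ + (w.re - 1) * s) ^ 2 - (w.im * s) ^ 2) := by
    simp only [quad, Complex.add_re, Complex.re_sum]
    congr 1
    · refine Finset.sum_congr rfl fun i _ => ?_
      simp [pow_two]
      ring
    · simp [pow_two]
  have h2 : ∑ i, ((x₁ i + k * (1 - w.re) * (x i - x₁ i) - y i) ^ 2
        - w.im ^ 2 * k ^ 2 * (x - x₁) i ^ 2) ≥ -(w.im ^ 2 * k ^ 2 * ‖x - x₁‖ ^ 2) := by
    rw [EuclideanSpace.real_norm_sq_eq, Finset.sum_sub_distrib, ← Finset.mul_sum]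
    have : 0 ≤ ∑ i, (x₁ i + k * (1 - w.re) * (x i - x₁ i) - y i) ^ 2 :=
      Finset.sum_nonneg fun i _ => sq_nonneg _
    linarith
  have h3 : s ^ 2 ≤ 16 / 9 := by rw [← sq_abs]; nlinarith [abs_nonneg s]
  have h4 : k ^ 2 ≤ 16 / 9 := by nlinarith
  have h5 : ‖x - x₁‖ ^ 2 ≤ D₀ ^ 2 := by gcongr
  have h6 : k ^ 2 * ‖x - x₁‖ ^ 2 ≤ 16 / 9 * D₀ ^ 2 := by gcongr
  rw [h1]
  nlinarith [sq_nonneg w.im, mul_nonneg (sq_nonneg w.im) (sub_nonneg.2 h3),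
    mul_nonneg (sq_nonneg w.im) (sub_nonneg.2 h6)]

/-! ### Propagation along the segment -/

/-- On a sector `|Im w| ≤ θ * Re w` of small opening, the real part of the height dominates the
imaginary parts. Here `r` and `u` stand for the real and imaginary part of `w`. -/
lemma path_aux {D₀ t₀ k s δ θ r u : ℝ} (ht₀ : 0 < t₀) (ht₁ : t₀ ≤ 1) (hδ0 : 0 < δ) (hδ1 : δ ≤ 1)
    (hθ : 16 / 9 * (1 + D₀ ^ 2) * θ ^ 2 ≤ t₀ ^ 2 / 2) (hk2 : 1 ≤ k)
    (hkd : k * (1 - δ / 4) = 1) (hs : s = (t₀ - δ) * k) (h1 : |u| ≤ θ * r) (h2 : 0 ≤ r)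
    (h3 : r ≤ 1) :
    (δ * t₀) ^ 2 / 8 < (t₀ + (r - 1) * s) ^ 2 - 16 / 9 * (1 + D₀ ^ 2) * u ^ 2 := by
  have h4 : u ^ 2 ≤ θ ^ 2 * r ^ 2 := by
    rw [← sq_abs, ← mul_pow]
    exact pow_le_pow_left₀ (abs_nonneg _) h1 2
  have h5 : 16 / 9 * (1 + D₀ ^ 2) * u ^ 2 ≤ t₀ ^ 2 / 2 * r ^ 2 := by
    calc 16 / 9 * (1 + D₀ ^ 2) * u ^ 2
        ≤ 16 / 9 * (1 + D₀ ^ 2) * (θ ^ 2 * r ^ 2) := by gcongr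
      _ = 16 / 9 * (1 + D₀ ^ 2) * θ ^ 2 * r ^ 2 := by ring
      _ ≤ t₀ ^ 2 / 2 * r ^ 2 := by gcongr
  have ha : 3 / 4 * δ ≤ t₀ - s := by
    have : t₀ - s = k * (δ - t₀ * (δ / 4)) := by
      rw [hs]; linear_combination (-t₀) * hkd
    rw [this]
    have h7 : 3 / 4 * δ ≤ δ - t₀ * (δ / 4) := by nlinarith
    have h8 : 0 ≤ δ - t₀ * (δ / 4) := by nlinarith
    nlinarith
  have h9 : t₀ + (r - 1) * s = r * t₀ + (1 - r) * (t₀ - s) := by ring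
  have h10 : t₀ * r ≤ t₀ + (r - 1) * s := by
    rw [h9]; nlinarith
  have h11 : 3 / 4 * (δ * t₀) ≤ t₀ + (r - 1) * s := by
    rw [h9]
    have h12 : 3 / 4 * (δ * t₀) ≤ t₀ := by nlinarith
    have h13 : 3 / 4 * (δ * t₀) ≤ t₀ - s := by nlinarith
    nlinarith
  have h14 : (t₀ * r) ^ 2 ≤ (t₀ + (r - 1) * s) ^ 2 :=
    pow_le_pow_left₀ (by positivity) h10 2
  have h15 : (3 / 4 * (δ * t₀)) ^ 2 ≤ (t₀ + (r - 1) * s) ^ 2 :=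
    pow_le_pow_left₀ (by positivity) h11 2
  have h16 : 0 < (δ * t₀) ^ 2 := by positivity
  nlinarith

/-- Propagation of smallness from a neighbourhood of `(x₁, 0)` to the point `(x, δ)`, along the
complexified segment joining them. -/
lemma norm_pot_path_le {Ω : Set (EuclideanSpace ℝ (Fin n))} (hΩ : MeasurableSet Ω)
    {g : EuclideanSpace ℝ (Fin n) → ℝ} (hg : IntegrableOn g Ω) {b : ℝ} (hb : 0 ≤ b)
    {x x₁ : EuclideanSpace ℝ (Fin n)} {D₀ t₀ r m : ℝ} {p : ℕ} (hp : 2 ≤ p)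
    (hx : ‖x - x₁‖ ≤ D₀) (ht₀ : 0 < t₀) (ht₁ : t₀ ≤ 1)
    (hθ : 16 / 9 * (1 + D₀ ^ 2) * (4 / p) ^ 2 ≤ t₀ ^ 2 / 2) (hpt : 4 / 3 * (2 / (p : ℝ)) ≤ t₀)
    (hpr : 4 / 3 * (2 / (p : ℝ)) * D₀ ≤ r) (hm0 : 0 ≤ m)
    (hm : ∀ X ∈ closedBall (cplx x₁) r, ∀ τ : ℂ, ‖τ‖ ≤ 4 * t₀ ^ 2 → ‖pot Ω g b X τ‖ ≤ m)
    {δ : ℝ} (hδ0 : 0 < δ) (hδ1 : δ < 1) {l : ℝ} (hl : 0 ≤ l) :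
    ‖pot Ω g b (cplx x) ((δ : ℂ) ^ 2)‖ ≤ Real.exp (-(l * (δ / 4) ^ p)) *
      (((δ * t₀) ^ 2 / 8) ^ (-b) * (∫ y in Ω, |g y|) + m * Real.exp l) := by
  have hp0 : p ≠ 0 := by omega
  -- the target is the parameter `w = δ / 4`, the base point is `w = 1`
  set k : ℝ := 1 / (1 - δ / 4) with hk
  have hkd : k * (1 - δ / 4) = 1 := by exact div_mul_cancel₀ 1 (by linarith)
  have hk0 : 0 ≤ k := by rw [hk]; apply div_nonneg <;> linarith
  have hk1 : k ≤ 4 / 3 := by rw [hk, div_le_iff₀] <;> linarith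
  have hk2 : 1 ≤ k := by nlinarith
  set s : ℝ := (t₀ - δ) * k with hs
  have hs1 : |s| ≤ 4 / 3 := by
    rw [hs, abs_mul, abs_of_nonneg hk0]
    have : |t₀ - δ| ≤ 1 := abs_le.2 ⟨by linarith, by linarith⟩
    nlinarith [abs_nonneg (t₀ - δ)]
  set κ' : ℝ := (δ * t₀) ^ 2 / 8 with hκ'
  have hκpos : 0 < κ' := by positivity
  set U : Set ℂ := {w | κ' < (t₀ + (w.re - 1) * s) ^ 2 - 16 / 9 * (1 + D₀ ^ 2) * w.im ^ 2} with hU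
  have hUo : IsOpen U := isOpen_lt continuous_const (by fun_prop)
  set X : ℂ → Fin n → ℂ := fun w i => (x₁ i : ℂ) + (k * (1 - w)) * ((x i : ℂ) - x₁ i) with hX
  set T : ℂ → ℂ := fun w => (t₀ + (w - 1) * s) ^ 2 with hT
  have hre : ∀ w ∈ U, ∀ y ∈ Ω, κ' ≤ (quad (X w) (T w) y).re := fun w hw y _ =>
    hw.le.trans (quad_line_re_ge y w hk0 hk1 hs1 hx)
  have hXd : ∀ w i, HasDerivAt (fun w => X w i) (-(k * ((x i : ℂ) - x₁ i))) w := fun w i => by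
    have := ((((hasDerivAt_id w).const_sub 1).const_mul (k : ℂ)).mul_const
      ((x i : ℂ) - x₁ i)).const_add (x₁ i : ℂ)
    refine this.congr_deriv ?_
    ring
  have hTd : ∀ w, HasDerivAt T (2 * (t₀ + (w - 1) * s) * s) w := fun w => by
    have := ((((hasDerivAt_id w).sub_const 1).mul_const (s : ℂ)).const_add (t₀ : ℂ)).pow 2
    refine this.congr_deriv ?_
    simp
  set F : ℂ → ℂ := fun w => pot Ω g b (X w) (T w) with hF
  have hFd : ∀ w ∈ U, DifferentiableAt ℂ F w := fun w hw =>
    (hasDerivAt_pot hΩ hg hUo hκpos hb hXd hTd hre hw).differentiableAt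
  have hFM : ∀ w ∈ U, ‖F w‖ ≤ κ' ^ (-b) * ∫ y in Ω, |g y| := fun w hw =>
    norm_pot_le hΩ hg hκpos hb (hre w hw)
  have hUmem : ∀ v : ℂ, 0 ≤ v.re → ‖v‖ ≤ 1 → v ^ ((p : ℂ)⁻¹) ∈ U := by
    intro v hv hv1
    obtain ⟨h1, h2⟩ := abs_im_cpow_inv_le hv hp
    have h3 := (Complex.re_le_norm _).trans (norm_cpow_inv_le hv1 hp0)
    set w := v ^ ((p : ℂ)⁻¹) with hw
    exact path_aux ht₀ ht₁ hδ0 hδ1.le hθ hk2 hkd hs h1 h2 h3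
  have hDC := diffContOnCl_comp_root hp0 fun v hv hv1 => hFd _ (hUmem v hv hv1)
  have hc0 : 0 < (δ / 4) ^ p := by positivity
  have hc1 : (δ / 4) ^ p < 1 := pow_lt_one₀ (by positivity) (by linarith) hp0
  have key := norm_le_of_small_arc hDC (t := l) (m := m) (M := κ' ^ (-b) * ∫ y in Ω, |g y|)
    (c := (δ / 4) ^ p) hl hm0
    (mul_nonneg (by positivity) (integral_nonneg fun _ => abs_nonneg _)) hc0 hc1
    (fun v hv hv1 => hFM _ (hUmem v hv.ge hv1)) ?_
  · rw [ofReal_pow_cpow_inv (by positivity) hp0] at key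
    have e1 : X ((δ / 4 : ℝ) : ℂ) = cplx x := by
      ext i
      have hkd' : (k : ℂ) * (1 - ((δ / 4 : ℝ) : ℂ)) = 1 := by exact_mod_cast hkd
      simp only [hX, hkd', cplx]
      ring
    have e2 : T ((δ / 4 : ℝ) : ℂ) = (δ : ℂ) ^ 2 := by
      have : t₀ + (δ / 4 - 1) * s = δ := by rw [hs]; linear_combination (-(t₀ - δ)) * hkd
      simp only [hT]
      congr 1
      exact_mod_cast this
    simp only [hF, e1, e2] at key
    exact key
  · intro v hv hv1
    have h1 := norm_cpow_inv_sub_one_le hv hv1 hp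
    set w := v ^ ((p : ℂ)⁻¹) with hw
    apply hm
    · rw [mem_closedBall_iff_norm]
      refine le_trans ?_ hpr
      have hD₀ : 0 ≤ D₀ := (norm_nonneg _).trans hx
      refine (pi_norm_le_iff_of_nonneg (by positivity)).2 fun i => ?_
      have e : (X w - cplx x₁) i = k * (1 - w) * (((x - x₁) i : ℝ) : ℂ) := by
        simp [hX, cplx]
      rw [e, norm_mul, norm_mul, Complex.norm_real, Complex.norm_real, norm_sub_rev,
        Real.norm_of_nonneg hk0]
      have := (PiLp.norm_apply_le (x - x₁) i).trans hx
      gcongr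
    · simp only [hT, norm_pow]
      have h3 : ‖(t₀ : ℂ) + (w - 1) * s‖ ≤ 2 * t₀ := by
        refine (norm_add_le _ _).trans ?_
        rw [norm_mul, Complex.norm_real, Complex.norm_real, Real.norm_of_nonneg ht₀.le,
          Real.norm_eq_abs]
        have : ‖w - 1‖ * |s| ≤ 2 / p * (4 / 3) := by gcongr
        linarith
      calc ‖(t₀ : ℂ) + (w - 1) * s‖ ^ 2 ≤ (2 * t₀) ^ 2 := by gcongr
        _ = 4 * t₀ ^ 2 := by ring

/-- Pointwise smallness of `Qdelta` on `Ω₂`. The exponent `p` fixes the opening of the sector, which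
has to be small in terms of the geometry only. -/
lemma Setup.Qdelta_small (h : Setup Ω₁ Ω₂ x₁ ρ κ B d) (hn : 1 ≤ n) {D₀ : ℝ}
    (hD : ∀ x ∈ Ω₂, ‖x - x₁‖ ≤ D₀) :
    ∃ (A α D : ℝ) (p : ℕ), 0 ≤ A ∧ 0 ≤ α ∧ 0 ≤ D ∧ ∀ g : EuclideanSpace ℝ (Fin n) → ℝ,
      Measurable g → IntegrableOn g Ω₂ → ∀ N : ℕ, ∀ x ∈ Ω₂, ∀ δ ∈ Ioo (0 : ℝ) 1,
      |Qdelta n Ω₂ δ g x| ≤ A * Real.exp (α * N) * dataNorm Ω₁ Ω₂ g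
        + D * (δ ^ (n + 1))⁻¹ * Real.exp (-(N * (δ / 4) ^ p)) * ∫ y in Ω₂, |g y| := by
  obtain ⟨A, α, D, hA, hα, hD0, H⟩ := h.pot_tau_small hn
  have hρ := h.good.ρ_pos
  have hn0 : (0 : ℝ) < n := by exact_mod_cast hn
  obtain ⟨t₀, ht₀, ht₁, ht₂⟩ : ∃ t₀ : ℝ, 0 < t₀ ∧ t₀ ≤ 1 ∧
      4 * t₀ ^ 2 ≤ (ρ / 64) ^ 2 / (16 * n) := by
    have hpos : 0 < (ρ / 64) ^ 2 / (16 * n) := by positivity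
    refine ⟨min 1 ((ρ / 64) ^ 2 / (16 * n) / 4), by positivity, min_le_left _ _, ?_⟩
    have h1 := min_le_left 1 ((ρ / 64) ^ 2 / (16 * n) / 4)
    have h2 := min_le_right 1 ((ρ / 64) ^ 2 / (16 * n) / 4)
    have h3 : 0 < min 1 ((ρ / 64) ^ 2 / (16 * n) / 4) := by positivity
    nlinarith
  obtain ⟨p, hp, hθ, hpt, hpr⟩ : ∃ p : ℕ, 2 ≤ p ∧
      16 / 9 * (1 + D₀ ^ 2) * (4 / p) ^ 2 ≤ t₀ ^ 2 / 2 ∧ 4 / 3 * (2 / (p : ℝ)) ≤ t₀ ∧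
      4 / 3 * (2 / (p : ℝ)) * D₀ ≤ ρ / 128 := by
    have hl : ∀ c : ℝ, Filter.Tendsto (fun p : ℕ => c / (p : ℝ)) Filter.atTop (nhds 0) := fun c =>
      tendsto_const_div_atTop_nhds_zero_nat c
    have e1 : ∀ᶠ p : ℕ in Filter.atTop, 16 / 9 * (1 + D₀ ^ 2) * (4 / (p : ℝ)) ^ 2 < t₀ ^ 2 / 2 := by
      have := ((hl 4).pow 2).const_mul (16 / 9 * (1 + D₀ ^ 2))
      rw [zero_pow two_ne_zero, mul_zero] at this
      exact this.eventually_lt_const (by positivity)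
    have e2 : ∀ᶠ p : ℕ in Filter.atTop, 4 / 3 * (2 / (p : ℝ)) < t₀ := by
      have := (hl 2).const_mul (4 / 3)
      rw [mul_zero] at this
      exact this.eventually_lt_const ht₀
    have e3 : ∀ᶠ p : ℕ in Filter.atTop, 4 / 3 * (2 / (p : ℝ)) * D₀ < ρ / 128 := by
      have := ((hl 2).const_mul (4 / 3)).mul_const D₀
      rw [mul_zero, zero_mul] at this
      exact this.eventually_lt_const (by positivity)
    obtain ⟨p, h0, h1, h2, h3⟩ := ((Filter.eventually_ge_atTop 2).and (e1.and (e2.and e3))).exists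
    exact ⟨p, h0, h1.le, h2.le, h3.le⟩
  set b : ℝ := ((n : ℝ) + 1) / 2 with hb
  have hb0 : 0 ≤ b := by positivity
  set K := (t₀ ^ 2 / 8) ^ (-b) with hK
  have hK0 : 0 ≤ K := by positivity
  refine ⟨A, 2 * α + 1, K + D, p, hA, by positivity, by positivity,
    fun g hgm hg N x hx δ hδ => ?_⟩
  obtain ⟨hδ0, hδ1⟩ := hδ
  set E := dataNorm Ω₁ Ω₂ g with hE
  set L := ∫ y in Ω₂, |g y| with hL
  have hE0 : 0 ≤ E := dataNorm_nonneg g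
  have hL0 : 0 ≤ L := integral_abs_nonneg g
  have hpath := norm_pot_path_le h.meas₂ hg hb0 (m := A * Real.exp (α * (2 * N : ℕ)) * E
    + D * Real.exp (-(2 * N : ℕ)) * L) hp (hD x hx) ht₀ ht₁ hθ hpt hpr (by positivity)
    (fun X hX τ hτ => H g hgm hg (2 * N) X hX τ (hτ.trans ht₂)) hδ0 hδ1 (l := N) (by positivity)
  have hQ : |Qdelta n Ω₂ δ g x| = δ * ‖pot Ω₂ g b (cplx x) ((δ : ℂ) ^ 2)‖ := by
    rw [← Real.norm_eq_abs, ← Complex.norm_real, Qdelta_eq_pot, norm_mul, Complex.norm_real,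
      Real.norm_of_nonneg hδ0.le]
  have hκ : ((δ * t₀) ^ 2 / 8) ^ (-b) = (δ ^ (n + 1))⁻¹ * K := by
    rw [hK, mul_pow, mul_div_assoc, Real.mul_rpow (by positivity) (by positivity)]
    congr 1
    rw [← Real.rpow_natCast, ← Real.rpow_mul hδ0.le, ← Real.rpow_natCast δ (n + 1),
      ← Real.rpow_neg hδ0.le]
    congr 1
    rw [hb]
    push_cast
    ring
  rw [hκ, ← hL] at hpath
  set c := (δ / 4) ^ p with hc
  have hc1 : c ≤ 1 := pow_le_one₀ (by positivity) (by linarith)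
  have hc0 : 0 ≤ c := by positivity
  have hN : (0 : ℝ) ≤ N := N.cast_nonneg
  have e1 : Real.exp (-(N * c)) ≤ 1 := Real.exp_le_one_iff.2 (by nlinarith)
  have e2 : Real.exp (α * (2 * N : ℕ)) * Real.exp N = Real.exp ((2 * α + 1) * N) := by
    rw [← Real.exp_add]; congr 1; push_cast; ring
  have e3 : Real.exp (-((2 * N : ℕ) : ℝ)) * Real.exp N ≤ 1 := by
    rw [← Real.exp_add]; apply Real.exp_le_one_iff.2; push_cast; linarith
  have e4 : 1 ≤ (δ ^ (n + 1))⁻¹ := (one_le_inv₀ (by positivity)).2 (pow_le_one₀ hδ0.le hδ1.le)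
  set W := (δ ^ (n + 1))⁻¹ with hW
  rw [hQ]
  calc δ * ‖pot Ω₂ g b (cplx x) ((δ : ℂ) ^ 2)‖
      ≤ 1 * (Real.exp (-(N * c)) * (W * K * L + (A * Real.exp (α * (2 * N : ℕ)) * E
        + D * Real.exp (-(2 * N : ℕ)) * L) * Real.exp N)) := by gcongr
    _ = Real.exp (-(N * c)) * (A * (Real.exp (α * (2 * N : ℕ)) * Real.exp N) * E)
        + (W * K + 1 * (D * (Real.exp (-((2 * N : ℕ) : ℝ)) * Real.exp N)))
          * Real.exp (-(N * c)) * L := by ring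
    _ ≤ 1 * (A * Real.exp ((2 * α + 1) * N) * E)
        + (W * K + W * (D * 1)) * Real.exp (-(N * c)) * L := by
      rw [e2]
      gcongr
    _ = _ := by ring

/-! ### Geometry, choice of parameters and conclusion -/

/-- Around any point of `Ω₁` a polydisc of radius small compared with the distance to `Ω₂` and to
the complement of `Ω₁` satisfies all geometric requirements. -/
lemma exists_setup (hΩ₁ : IsOpen Ω₁) (hΩ₂ : IsOpen Ω₂) (hb₁ : Bornology.IsBounded Ω₁)
    (hb₂ : Bornology.IsBounded Ω₂) (hne₁ : Ω₁.Nonempty)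
    (hdisj : Disjoint (closure Ω₁) (closure Ω₂)) :
    ∃ (x₁ : EuclideanSpace ℝ (Fin n)) (ρ κ B d D₀ : ℝ), Setup Ω₁ Ω₂ x₁ ρ κ B d ∧
      ∀ x ∈ Ω₂, ‖x - x₁‖ ≤ D₀ := by
  obtain ⟨x₁, hx₁⟩ := hne₁
  obtain ⟨r₁, hr₁, hball⟩ := Metric.isOpen_iff.1 hΩ₁ x₁ hx₁
  obtain ⟨d, hd, hdd⟩ := Metric.exists_pos_forall_lt_edist hb₁.isCompact_closure isClosed_closure
    hdisj
  have hd0 : (0 : ℝ) < d := hd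
  have hdist : ∀ x ∈ Ω₁, ∀ y ∈ Ω₂, (d : ℝ) ≤ ‖x - y‖ := by
    intro x hx y hy
    have h1 := hdd x (subset_closure hx) y (subset_closure hy)
    rw [edist_nndist, ENNReal.coe_lt_coe] at h1
    have h2 : (d : ℝ) < nndist x y := h1
    rw [coe_nndist, dist_eq_norm] at h2
    exact h2.le
  obtain ⟨D, hD⟩ := (hb₂.subset_closedBall x₁)
  set D₀ := max D 0 with hD₀
  have hDD : ∀ x ∈ Ω₂, ‖x - x₁‖ ≤ D₀ := fun x hx => by
    have := hD hx
    rw [mem_closedBall_iff_norm] at this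
    exact this.trans (le_max_left _ _)
  set q := min (d : ℝ) r₁ with hq
  have hq0 : 0 < q := lt_min hd0 hr₁
  have hn1 : (0 : ℝ) < n + 1 := by positivity
  set ρ := q / (4 * ((n : ℝ) + 1)) with hρ
  have hρ0 : 0 < ρ := by positivity
  have hρq : 16 * ((n : ℝ) + 1) ^ 2 * ρ ^ 2 = q ^ 2 := by rw [hρ]; field_simp; ring
  have hn0 : (0 : ℝ) ≤ n := n.cast_nonneg
  have hρn : (n + 1) * ρ ^ 2 ≤ q ^ 2 / 16 := by
    rw [← hρq]; nlinarith [mul_nonneg (mul_nonneg hn0 hn1.le) (sq_nonneg ρ)]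
  have hqd : q ^ 2 ≤ (d : ℝ) ^ 2 := by gcongr; exact min_le_left _ _
  have hqr : q ^ 2 ≤ r₁ ^ 2 := by gcongr; exact min_le_right _ _
  refine ⟨x₁, ρ, (d : ℝ) ^ 2 / 4, ρ + D₀, d, D₀, ⟨⟨hρ0, by positivity, ?_, ?_⟩,
    hΩ₁.measurableSet, hΩ₂.measurableSet, hb₁.measure_lt_top.ne, hd0, hdist, ?_, ?_⟩, hDD⟩
  · intro x hx τ hτ y hy
    rw [mem_ball_iff_norm] at hx
    have hxi : ∀ i, ‖x i - (x₁ i : ℂ)‖ ≤ ρ := fun i =>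
      (norm_le_pi_norm (x - cplx x₁) i).trans hx.le
    have h1 : (quad x τ y).re = ∑ i, (((x i).re - y i) ^ 2 - (x i).im ^ 2) + τ.re := by
      simp only [quad, Complex.add_re, Complex.re_sum]
      congr 1
      refine Finset.sum_congr rfl fun i _ => ?_
      simp [pow_two]
    have h2 : ∑ i : Fin n, ((x₁ - y) i ^ 2 / 2 - 2 * ρ ^ 2)
        ≤ ∑ i, (((x i).re - y i) ^ 2 - (x i).im ^ 2) := by
      refine Finset.sum_le_sum fun i _ => ?_
      have e1 : |(x i).re - x₁ i| ≤ ρ := by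
        have := (Complex.abs_re_le_norm _).trans (hxi i)
        simpa using this
      have e2 : |(x i).im| ≤ ρ := by
        have := (Complex.abs_im_le_norm _).trans (hxi i)
        simpa using this
      have e3 : ((x i).re - x₁ i) ^ 2 ≤ ρ ^ 2 := sq_le_sq' (abs_le.1 e1).1 (abs_le.1 e1).2
      have e4 : (x i).im ^ 2 ≤ ρ ^ 2 := sq_le_sq' (abs_le.1 e2).1 (abs_le.1 e2).2
      rw [PiLp.sub_apply]
      nlinarith [sq_nonneg ((x₁ i - y i) + 2 * ((x i).re - x₁ i))]
    rw [Finset.sum_sub_distrib, ← Finset.sum_div, ← EuclideanSpace.real_norm_sq_eq,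
      Finset.sum_const, Finset.card_univ, Fintype.card_fin, nsmul_eq_mul] at h2
    have h3 : (d : ℝ) ^ 2 ≤ ‖x₁ - y‖ ^ 2 := by gcongr; exact hdist x₁ hx₁ y hy
    have h4 : -(ρ ^ 2) ≤ τ.re := by
      have := (abs_le.1 ((Complex.abs_re_le_norm τ).trans hτ.le)).1
      exact this
    rw [h1]
    nlinarith [sq_nonneg ρ]
  · intro x hx y hy j
    rw [mem_ball_iff_norm] at hx
    have h1 : ‖(x - cplx x₁) j‖ ≤ ρ := (norm_le_pi_norm _ j).trans hx.le
    have h2 : ‖(cplx x₁ - cplx y) j‖ ≤ D₀ := by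
      refine (norm_le_pi_norm _ j).trans ((norm_cplx_sub_le _ _).trans ?_)
      rw [norm_sub_rev]
      exact hDD y hy
    have h3 : x j - (y j : ℂ) = (x - cplx x₁) j + (cplx x₁ - cplx y) j := by
      simp [cplx]
    rw [h3]
    exact (norm_add_le _ _).trans (add_le_add h1 h2)
  · intro x hx
    apply hball
    rw [mem_ball_iff_norm] at hx ⊢
    have h1 : ‖x - x₁‖ ^ 2 ≤ n * ρ ^ 2 := by
      rw [EuclideanSpace.real_norm_sq_eq]
      have : ∀ i ∈ (Finset.univ : Finset (Fin n)), (x - x₁) i ^ 2 ≤ ρ ^ 2 := by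
        intro i _
        have h2 : ‖(cplx x - cplx x₁) i‖ ≤ ρ := (norm_le_pi_norm _ i).trans hx.le
        have h3 : (cplx x - cplx x₁) i = (((x - x₁) i : ℝ) : ℂ) := by simp [cplx]
        rw [h3, Complex.norm_real, Real.norm_eq_abs] at h2
        exact sq_le_sq' (abs_le.1 h2).1 (abs_le.1 h2).2
      refine (Finset.sum_le_card_nsmul _ _ _ this).trans ?_
      simp
    refine lt_of_pow_lt_pow_left₀ 2 hr₁.le ?_
    have : 0 < r₁ ^ 2 := by positivity
    nlinarith [sq_nonneg ρ]
  · have : 0 ≤ D₀ := le_max_right _ _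
    positivity

/-- On a set of finite measure, `L²` embeds into `L¹`, with the Cauchy-Schwarz bound. -/
lemma integrableOn_of_sq {Ω : Set (EuclideanSpace ℝ (Fin n))} (hv : volume Ω ≠ ⊤)
    {g : EuclideanSpace ℝ (Fin n) → ℝ} (hgm : Measurable g)
    (hg : IntegrableOn (fun y => g y ^ 2) Ω) :
    IntegrableOn g Ω ∧
      ∫ y in Ω, |g y| ≤ Real.sqrt (volume.real Ω) * Real.sqrt (∫ y in Ω, g y ^ 2) := by
  have hfin : IsFiniteMeasure (volume.restrict Ω) := ⟨by simpa using hv.lt_top⟩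
  have hL : MemLp g 2 (volume.restrict Ω) :=
    (memLp_two_iff_integrable_sq hgm.aestronglyMeasurable).2 hg
  have hi : IntegrableOn g Ω := hL.integrable one_le_two
  refine ⟨hi, ?_⟩
  -- Cauchy–Schwarz, from positivity of the quadratic polynomial `s ↦ ∫ (|g| - s)²`
  set V := volume.real Ω with hV
  set I := ∫ y in Ω, |g y| with hI
  set G := ∫ y in Ω, g y ^ 2 with hG
  have hV0 : 0 ≤ V := measureReal_nonneg
  have hG0 : 0 ≤ G := integral_nonneg fun _ => sq_nonneg _
  have hI0 : 0 ≤ I := integral_nonneg fun _ => abs_nonneg _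
  have key : ∀ s : ℝ, 0 ≤ G - 2 * s * I + s ^ 2 * V := by
    intro s
    have h0 : 0 ≤ ∫ y in Ω, (|g y| - s) ^ 2 := integral_nonneg fun _ => sq_nonneg _
    have h1 : ∫ y in Ω, (|g y| - s) ^ 2 = G - 2 * s * I + s ^ 2 * V := by
      have e : ∀ y, (|g y| - s) ^ 2 = g y ^ 2 - 2 * s * |g y| + s ^ 2 := fun y => by
        rw [sub_sq, sq_abs]; ring
      simp_rw [e]
      have i1 : Integrable (fun y => 2 * s * |g y|) (volume.restrict Ω) := hi.abs.const_mul _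
      have i2 : Integrable (fun y => g y ^ 2 - 2 * s * |g y|) (volume.restrict Ω) := hg.sub i1
      rw [integral_add i2 (integrable_const _), integral_sub hg i1, integral_const_mul,
        setIntegral_const, smul_eq_mul, mul_comm (volume.real Ω)]
    linarith
  have hsq : I ^ 2 ≤ V * G := by
    rcases hV0.eq_or_lt with h | h
    · have h2 := key ((G + 1) / (I + 1))
      have h3 := key (G + 1)
      rw [← h] at h3 ⊢
      have : I ≤ 0 := by
        by_contra! hc
        have h4 := key ((G + 1) / (2 * I))
        rw [← h] at h4
        have : 2 * ((G + 1) / (2 * I)) * I = G + 1 := by field_simp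
        linarith
      nlinarith
    · have h2 := key (I / V)
      have h3 : G - 2 * (I / V) * I + (I / V) ^ 2 * V = G - I ^ 2 / V := by field_simp; ring
      rw [h3, sub_nonneg, div_le_iff₀ h] at h2
      linarith
  rw [← Real.sqrt_mul hV0]
  exact Real.le_sqrt_of_sq_le hsq

/-- The choice of the free parameter `N`: the coefficient of the norm of `g` falls below `ε / 2`
while the coefficient of the data is at most exponential in `(|log ε| + 2) / δ ^ (p + 1)`. -/
lemma exists_param {A α D V : ℝ} (hA : 0 ≤ A) (hα : 0 ≤ α) (hD : 0 ≤ D) (hV : 0 ≤ V) (n p : ℕ) :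
    ∃ C : ℝ, 1 < C ∧ ∀ ε : ℝ, 0 < ε → ∀ δ ∈ Ioo (0 : ℝ) 1, ∃ N : ℕ,
      A * Real.exp (α * N) * Real.sqrt V
        ≤ Real.exp (C * (|Real.log ε| + 2) / δ ^ ((p : ℝ) + 1)) ∧
      D * (δ ^ (n + 1))⁻¹ * Real.exp (-(N * (δ / 4) ^ p)) * V ≤ ε / 2 := by
  set c₀ := Real.log (2 * V * D + 1) with hc₀
  have hVD : 0 ≤ V * D := by positivity
  have hc₀0 : 0 ≤ c₀ := Real.log_nonneg (by linarith)
  set c₁ := Real.log (A * Real.sqrt V + 1) with hc₁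
  have hAV : 0 ≤ A * Real.sqrt V := by positivity
  have hc₁0 : 0 ≤ c₁ := Real.log_nonneg (by linarith)
  set K : ℝ := 4 ^ p * (1 + c₀ + (n + 1)) + 1 with hK
  have hK0 : 0 ≤ K := by positivity
  refine ⟨α * K + c₁ + 2, by nlinarith [mul_nonneg hα hK0], fun ε hε δ hδ => ?_⟩
  obtain ⟨hδ0, hδ1⟩ := hδ
  set l := |Real.log ε| with hl
  have hl0 : 0 ≤ l := abs_nonneg _
  have hδi : 1 ≤ 1 / δ := by rw [le_div_iff₀ hδ0]; linarith
  set Y : ℝ := (4 / δ) ^ p * (l + c₀ + (n + 1) * (1 / δ)) with hY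
  have hY0 : 0 ≤ Y := by positivity
  refine ⟨⌈Y⌉₊, ?_, ?_⟩
  · have hN : (⌈Y⌉₊ : ℝ) ≤ Y + 1 := (Nat.ceil_lt_add_one hY0).le
    set Z := (l + 2) / δ ^ ((p : ℝ) + 1) with hZ
    have hZe : Z = (l + 2) * (1 / δ) ^ (p + 1) := by
      rw [hZ, one_div, inv_pow, div_eq_mul_inv]
      norm_cast
    have hpow : 1 ≤ (1 / δ) ^ (p + 1) := one_le_pow₀ hδi
    have hZ1 : 1 ≤ Z := by rw [hZe]; nlinarith
    have hYZ : Y + 1 ≤ K * Z := by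
      have h1 : l + c₀ + (n + 1) * (1 / δ) ≤ (1 + c₀ + (n + 1)) * (l + 2) * (1 / δ) := by
        have : 1 ≤ (l + 2) * (1 / δ) := by nlinarith
        have h2 : l ≤ (l + 2) * (1 / δ) := by nlinarith
        have h3 : c₀ ≤ c₀ * ((l + 2) * (1 / δ)) := by nlinarith
        have h4 : ((n : ℝ) + 1) * (1 / δ) ≤ (n + 1) * ((l + 2) * (1 / δ)) := by
          gcongr
          nlinarith
        linarith
      have h2 : Y ≤ 4 ^ p * (1 + c₀ + (n + 1)) * Z := by
        calc Y ≤ (4 / δ) ^ p * ((1 + c₀ + (n + 1)) * (l + 2) * (1 / δ)) := by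
              rw [hY]; gcongr
          _ = 4 ^ p * (1 + c₀ + (n + 1)) * Z := by
              rw [hZe, div_eq_mul_one_div 4 δ, mul_pow, pow_succ]
              ring
      have h3 : K * Z = 4 ^ p * (1 + c₀ + (n + 1)) * Z + Z := by rw [hK]; ring
      linarith
    have h5 : A * Real.sqrt V ≤ Real.exp c₁ := by
      rw [hc₁, Real.exp_log (by linarith)]; linarith
    calc A * Real.exp (α * ⌈Y⌉₊) * Real.sqrt V
        = Real.exp (α * ⌈Y⌉₊) * (A * Real.sqrt V) := by ring
      _ ≤ Real.exp (α * (K * Z)) * Real.exp c₁ := by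
          gcongr
          linarith
      _ = Real.exp (α * K * Z + c₁ * 1) := by rw [← Real.exp_add]; ring_nf
      _ ≤ Real.exp ((α * K + c₁ + 2) * Z) := by
          apply Real.exp_le_exp.2
          nlinarith
      _ = _ := by rw [hZ, mul_div_assoc]
  · have hN : Y ≤ ⌈Y⌉₊ := Nat.le_ceil _
    have h1 : l + c₀ + (n + 1) * (1 / δ) ≤ ⌈Y⌉₊ * (δ / 4) ^ p := by
      have : Y * (δ / 4) ^ p = l + c₀ + (n + 1) * (1 / δ) := by
        rw [hY, mul_right_comm, ← mul_pow]
        have : 4 / δ * (δ / 4) = 1 := by field_simp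
        rw [this, one_pow, one_mul]
      rw [← this]
      gcongr
    have h2 : (δ ^ (n + 1))⁻¹ ≤ Real.exp ((n + 1) * (1 / δ)) := by
      have h3 : 1 / δ ≤ Real.exp (1 / δ) := by linarith [Real.add_one_le_exp (1 / δ)]
      calc (δ ^ (n + 1))⁻¹ = (1 / δ) ^ (n + 1) := by rw [one_div, inv_pow]
        _ ≤ Real.exp (1 / δ) ^ (n + 1) := by gcongr
        _ = _ := by rw [← Real.exp_nat_mul]; push_cast; ring_nf
    have h3 : Real.exp (-l) ≤ ε := by
      calc Real.exp (-l) ≤ Real.exp (Real.log ε) := by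
            apply Real.exp_le_exp.2
            exact neg_abs_le _
        _ = ε := Real.exp_log hε
    have h4 : Real.exp (-c₀) * (2 * V * D) ≤ 1 := by
      rw [Real.exp_neg, hc₀, Real.exp_log (by linarith), inv_mul_le_iff₀ (by linarith)]
      linarith
    calc D * (δ ^ (n + 1))⁻¹ * Real.exp (-(⌈Y⌉₊ * (δ / 4) ^ p)) * V
        ≤ D * Real.exp ((n + 1) * (1 / δ)) * Real.exp (-(l + c₀ + (n + 1) * (1 / δ))) * V := by
          gcongr
      _ = Real.exp (-l) * (Real.exp (-c₀) * (2 * V * D)) / 2 := by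
          rw [show -(l + c₀ + ((n : ℝ) + 1) * (1 / δ)) = -l + -c₀ + -((n + 1) * (1 / δ)) by ring,
            Real.exp_add, Real.exp_add, Real.exp_neg ((n + 1) * (1 / δ))]
          field_simp
      _ ≤ ε * 1 / 2 := by gcongr
      _ = ε / 2 := by ring

end RieszPropagation

theorem stmt_17 (n : ℕ) (hn : 2 ≤ n) (Ω₁ Ω₂ : Set (EuclideanSpace ℝ (Fin n)))
    (hΩ₁o : IsOpen Ω₁) (hΩ₁b : Bornology.IsBounded Ω₁) (hΩ₁ne : Ω₁.Nonempty)
    (hΩ₂o : IsOpen Ω₂) (hΩ₂b : Bornology.IsBounded Ω₂) (hΩ₂ne : Ω₂.Nonempty)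
    (hdisj : Disjoint (closure Ω₁) (closure Ω₂)) :
    ∃ σ C : ℝ, 0 < σ ∧ 1 < C ∧
      ∀ g : EuclideanSpace ℝ (Fin n) → ℝ, Measurable g →
        IntegrableOn (fun x => (g x) ^ 2) Ω₂ volume →
        ∀ ε : ℝ, 0 < ε → ∀ δ : ℝ, δ ∈ Ioo (0 : ℝ) 1 →
          Real.sqrt (∫ x in Ω₂, (Qdelta n Ω₂ δ g x) ^ 2) ≤
            Real.exp (C * (|Real.log ε| + 2) / δ ^ σ) *
              Real.sqrt (∑ j : Fin n, ∫ x in Ω₁, (truncRiesz n Ω₂ j g x) ^ 2) +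
            (ε / 2) * Real.sqrt (∫ x in Ω₂, (g x) ^ 2) := by
  obtain ⟨x₁, ρ, κ, B, d, D₀, hS, hD₀⟩ := RieszPropagation.exists_setup hΩ₁o hΩ₂o
    hΩ₁b hΩ₂b hΩ₁ne hdisj
  obtain ⟨A, α, D, p, hA, hα, hD, H⟩ := hS.Qdelta_small (by omega) hD₀
  have hv : volume Ω₂ ≠ ⊤ := hΩ₂b.measure_lt_top.ne
  set V := volume.real Ω₂ with hV
  have hV0 : 0 ≤ V := measureReal_nonneg
  obtain ⟨C, hC, hpar⟩ := RieszPropagation.exists_param hA hα hD hV0 n p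
  refine ⟨p + 1, C, by positivity, hC, fun g hgm hg ε hε δ hδ => ?_⟩
  obtain ⟨N, hN1, hN2⟩ := hpar ε hε δ hδ
  obtain ⟨hgi, hCS⟩ := RieszPropagation.integrableOn_of_sq hv hgm hg
  have hdef : Real.sqrt (∑ j : Fin n, ∫ x in Ω₁, (truncRiesz n Ω₂ j g x) ^ 2)
      = RieszPropagation.dataNorm Ω₁ Ω₂ g := rfl
  rw [hdef]
  set E := RieszPropagation.dataNorm Ω₁ Ω₂ g with hE
  set G := Real.sqrt (∫ x in Ω₂, (g x) ^ 2) with hG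
  have hE0 : 0 ≤ E := Real.sqrt_nonneg _
  have hG0 : 0 ≤ G := Real.sqrt_nonneg _
  have hδ0 : 0 < δ := hδ.1
  set S := A * Real.exp (α * N) * E
    + D * (δ ^ (n + 1))⁻¹ * Real.exp (-(N * (δ / 4) ^ p)) * ∫ y in Ω₂, |g y| with hSdef
  have hS0 : 0 ≤ S := by
    have : 0 ≤ ∫ y in Ω₂, |g y| := RieszPropagation.integral_abs_nonneg g
    positivity
  have hint : ∫ x in Ω₂, (Qdelta n Ω₂ δ g x) ^ 2 ≤ S ^ 2 * V := by
    refine (Real.le_norm_self _).trans ?_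
    refine norm_setIntegral_le_of_norm_le_const hv.lt_top fun x hx => ?_
    rw [Real.norm_eq_abs, abs_pow]
    exact pow_le_pow_left₀ (abs_nonneg _) (H g hgm hgi N x hx δ hδ) 2
  calc Real.sqrt (∫ x in Ω₂, (Qdelta n Ω₂ δ g x) ^ 2)
      ≤ Real.sqrt (S ^ 2 * V) := Real.sqrt_le_sqrt hint
    _ = S * Real.sqrt V := by rw [Real.sqrt_mul (by positivity), Real.sqrt_sq hS0]
    _ = (A * Real.exp (α * N) * Real.sqrt V) * E
        + D * (δ ^ (n + 1))⁻¹ * Real.exp (-(N * (δ / 4) ^ p)) * (Real.sqrt V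
          * ∫ y in Ω₂, |g y|) := by rw [hSdef]; ring
    _ ≤ Real.exp (C * (|Real.log ε| + 2) / δ ^ ((p : ℝ) + 1)) * E
        + D * (δ ^ (n + 1))⁻¹ * Real.exp (-(N * (δ / 4) ^ p)) * (Real.sqrt V
          * (Real.sqrt V * G)) := by gcongr
    _ = Real.exp (C * (|Real.log ε| + 2) / δ ^ ((p : ℝ) + 1)) * E
        + D * (δ ^ (n + 1))⁻¹ * Real.exp (-(N * (δ / 4) ^ p)) * V * G := by
      rw [← mul_assoc (Real.sqrt V), Real.mul_self_sqrt hV0]; ring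
    _ ≤ Real.exp (C * (|Real.log ε| + 2) / δ ^ ((p : ℝ) + 1)) * E + ε / 2 * G := by gcongr
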